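/- arXiv:math/0503003 — 2 statements merged into one kernel-verified Lean document; each statement's English description precedes it below -/
import Mathlib

section
/- For every integer l > 1 and every integer a with a ≢ 0 (mod l), the function s_{a,l} is a modular form of weight 1 for Γ₁(l): it is holomorphic on ℍ, satisfies s_{a,l}((pτ+q)/(rτ+t)) = (rτ+t)·s_{a,l}(τ) for all (p q; r t) ∈ Γ₁(l) and all τ ∈ ℍ, and for every γ = (p q; r t) ∈ SL₂(ℤ) the function (rτ+t)^{−1}·s_{a,l}(γ·τ) is bounded as Im τ → ∞. -/
open scoped BigOperators
open UpperHalfPlane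

/-- The weight one Eisenstein series
`s_{a,m}(τ) = (1/2 − {a/m}) + Σ_{n≥1} q^n Σ_{d∣n} (δ_{d≡a (m)} − δ_{d≡−a (m)})`,
set to `0` when `a ≡ 0 (mod m)`. -/
noncomputable def sE (m : ℕ) (a : ℤ) (τ : ℍ) : ℂ :=
  if (a : ZMod m) = 0 then 0
  else
    (((1 : ℝ) / 2 - Int.fract ((a : ℝ) / (m : ℝ)) : ℝ) : ℂ) +
      ∑' n : ℕ,
        Complex.exp (2 * Real.pi * Complex.I * (n : ℂ) * (τ : ℂ)) *
          (∑ d ∈ Nat.divisors n,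
            ((if ((d : ℤ) : ZMod m) = (a : ZMod m) then (1 : ℂ) else 0) -
              (if ((d : ℤ) : ZMod m) = (-(a : ZMod m)) then (1 : ℂ) else 0)))

open Filter Topology
open Complex hiding I

/-- `π cot (π x)`. -/
noncomputable def cc (x : ℂ) : ℂ := Real.pi * Complex.cot (Real.pi * x)

lemma sum_symm (f : ℤ → ℂ) (M : ℕ) :
    ∑ n ∈ Finset.Icc (-(M : ℤ)) M, f n =
      f 0 + ∑ k ∈ Finset.range M, (f ((k : ℤ) + 1) + f (-((k : ℤ) + 1))) := by
  induction M with
  | zero => simp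
  | succ M ih =>
    have := Finset.sum_Icc_succ_eq_add_endpoints f (N := M)
    push_cast at this ⊢
    rw [this, ih, Finset.sum_range_succ]
    ring

lemma cc_zero : cc 0 = 0 := by simp [cc, Complex.cot]

lemma cc_neg (x : ℂ) : cc (-x) = - cc x := by
  simp [cc, Complex.cot, div_neg]

lemma cc_add_int (x : ℂ) (n : ℤ) : cc (x + n) = cc x := by
  have : (2 * Real.pi * Complex.I * (x + n) : ℂ) = 2 * Real.pi * Complex.I * x + n * (2 * Real.pi * Complex.I) := by ring
  simp only [cc, Complex.cot_pi_eq_exp_ratio, this]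
  rw [Complex.exp_add, Complex.exp_int_mul_two_pi_mul_I, mul_one]

lemma cc_tendsto {x : ℂ} (hx : x ∈ integerComplement ∨ x = 0) :
    Tendsto (fun M : ℕ => ∑ n ∈ Finset.Icc (-(M : ℤ)) M, (x + n)⁻¹) atTop (𝓝 (cc x)) := by
  simp_rw [sum_symm]
  rcases hx with hx | rfl
  · have h1 := cot_series_rep' hx
    have h2 := (summable_cotTerm hx).hasSum.tendsto_sum_nat
    have h3 : ∑' n, cotTerm x n = cc x - 1 / x := by
      rw [cc, h1]
    rw [h3] at h2
    have h4 := h2.const_add (1 / x)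
    rw [add_sub_cancel] at h4
    refine h4.congr fun M => ?_
    simp only [cotTerm]
    congr 1
    · simp
    · refine Finset.sum_congr rfl fun k _ => ?_
      push_cast
      rw [one_div, one_div, add_comm, sub_eq_add_neg]
  · rw [cc_zero]
    refine tendsto_const_nhds.congr fun M => ?_
    symm
    simp only [zero_add, Int.cast_zero, inv_zero]
    refine Finset.sum_eq_zero fun k _ => ?_
    push_cast
    rw [inv_neg, add_neg_cancel]

lemma exp_ne_one {x : ℂ} (hx : x ∈ integerComplement) : cexp (2 * Real.pi * Complex.I * x) ≠ 1 := by
  intro h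
  rw [Complex.exp_eq_one_iff] at h
  obtain ⟨n, hn⟩ := h
  apply hx
  refine ⟨n, ?_⟩
  have : (2 * Real.pi * Complex.I : ℂ) ≠ 0 := Complex.two_pi_I_ne_zero
  have h2 : (2 * Real.pi * Complex.I : ℂ) * x = (2 * Real.pi * Complex.I) * n := by rw [hn]; ring
  exact (mul_left_cancel₀ this h2).symm

lemma mem_ic_of_im_ne {x : ℂ} (hx : x.im ≠ 0) : x ∈ integerComplement := by
  rintro ⟨n, rfl⟩
  simp at hx

lemma cc_eq {x : ℂ} (hx : x ∈ integerComplement) :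
    cc x = - (Real.pi * Complex.I) - 2 * Real.pi * Complex.I * (cexp (2 * Real.pi * Complex.I * x) / (1 - cexp (2 * Real.pi * Complex.I * x))) := by
  have h := sub_ne_zero.mpr (exp_ne_one hx).symm
  rw [cc, Complex.cot_pi_eq_exp_ratio]
  generalize cexp (2 * Real.pi * Complex.I * x) = q at *
  have hI : (Complex.I : ℂ) ≠ 0 := I_ne_zero
  field_simp
  rw [I_sq]
  ring

lemma norm_exp_2pi (x : ℂ) : ‖cexp (2 * Real.pi * Complex.I * x)‖ = Real.exp (-(2 * Real.pi * x.im)) := by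
  rw [Complex.norm_exp]
  congr 1
  simp

lemma cc_bound {x : ℂ} {y : ℝ} (hy : 0 < y) (hx : y ≤ x.im) :
    ‖cc x + Real.pi * Complex.I‖ ≤
      2 * Real.pi * (Real.exp (-(2 * Real.pi * y)) / (1 - Real.exp (-(2 * Real.pi * y)))) := by
  rw [cc_eq (mem_ic_of_im_ne (hy.trans_le hx).ne')]
  set q := cexp (2 * Real.pi * Complex.I * x) with hq
  have h1 : ‖q‖ ≤ Real.exp (-(2 * Real.pi * y)) := by
    rw [hq, norm_exp_2pi]
    apply Real.exp_le_exp.mpr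
    have := Real.pi_pos
    nlinarith
  have h2 : Real.exp (-(2 * Real.pi * y)) < 1 := by
    rw [Real.exp_lt_one_iff]
    have := Real.pi_pos
    have : 0 < Real.pi * y := by positivity
    linarith
  have h3 : 1 - Real.exp (-(2 * Real.pi * y)) ≤ ‖1 - q‖ := by
    have := norm_sub_norm_le (1 : ℂ) q
    rw [norm_one] at this
    linarith
  have h4 : - (Real.pi * Complex.I) - 2 * Real.pi * Complex.I * (q / (1 - q)) + Real.pi * Complex.I =
    - (2 * Real.pi * Complex.I * (q / (1 - q))) := by ring
  rw [h4, norm_neg, norm_mul, norm_div]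
  have h5 : ‖(2 * Real.pi * Complex.I : ℂ)‖ = 2 * Real.pi := by
    simp [abs_of_pos Real.pi_pos]
  rw [h5]
  have := Real.pi_pos
  gcongr

lemma sum_tele (f : ℤ → ℂ) (M : ℕ) :
    ∑ m ∈ Finset.Icc (-(M : ℤ)) M, (f (m + 1) - f m) = f (M + 1) - f (-M) := by
  induction M with
  | zero => simp
  | succ M ih =>
    have := Finset.sum_Icc_succ_eq_add_endpoints (fun m => f (m + 1) - f m) (N := M)
    push_cast at this ⊢
    rw [this, ih]
    ring_nf

lemma tendsto_tele {f : ℤ → ℂ} {α β : ℂ} (ha : Tendsto f atTop (𝓝 α)) (hb : Tendsto f atBot (𝓝 β))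
    (u : ℤ) :
    Tendsto (fun M : ℕ => ∑ m ∈ Finset.Icc (-(M : ℤ)) M, (f (m + u) - f m)) atTop
      (𝓝 (u * (α - β))) := by
  have key (u : ℤ) : Tendsto (fun M : ℕ => ∑ m ∈ Finset.Icc (-(M : ℤ)) M,
      (f (m + (u + 1)) - f (m + u))) atTop (𝓝 (α - β)) := by
    have h (M : ℕ) := sum_tele (fun m => f (m + u)) M
    simp only [add_right_comm _ (1 : ℤ) u] at h
    simp only [← add_assoc, h]
    have hM : Tendsto (fun M : ℕ => (M : ℤ)) atTop atTop := tendsto_natCast_atTop_atTop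
    refine Tendsto.sub (ha.comp ?_) (hb.comp ?_)
    · exact tendsto_atTop_add_const_right _ _ (tendsto_atTop_add_const_right _ _ hM)
    · exact tendsto_atBot_add_const_right _ _ (tendsto_neg_atTop_atBot.comp hM)
  induction u using Int.induction_on with
  | zero => simp
  | succ u ih =>
    have := ih.add (key u)
    simp only [← Finset.sum_add_distrib] at this
    convert this using 2
    · refine Finset.sum_congr rfl fun m _ => ?_
      ring
    · push_cast; ring
  | pred u ih =>
    have := ih.sub (key (-u - 1))
    simp only [← Finset.sum_sub_distrib] at this
    convert this using 2
    · refine Finset.sum_congr rfl fun m _ => ?_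
      rw [sub_add_cancel]
      ring
    · push_cast; ring

lemma cc_tendsto_top (τ : ℍ) (z : ℂ) :
    Tendsto (fun m : ℤ => cc (z + m * τ)) atTop (𝓝 (-(Real.pi * Complex.I))) := by
  have him : Tendsto (fun m : ℤ => (z + m * τ : ℂ).im) atTop atTop := by
    have : (fun m : ℤ => (z + m * τ : ℂ).im) = fun m : ℤ => z.im + m * τ.im := by
      ext m; simp
    rw [this]
    exact tendsto_atTop_add_const_left _ _ (tendsto_intCast_atTop_atTop.atTop_mul_const τ.im_pos)
  have hq : Tendsto (fun m : ℤ => cexp (2 * Real.pi * Complex.I * (z + m * τ))) atTop (𝓝 0) := by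
    rw [tendsto_zero_iff_norm_tendsto_zero]
    simp_rw [norm_exp_2pi]
    refine Real.tendsto_exp_atBot.comp (tendsto_neg_atTop_atBot.comp ?_)
    exact him.const_mul_atTop (by positivity)
  have h1 : Tendsto (fun m : ℤ => - (Real.pi * Complex.I) - 2 * Real.pi * Complex.I *
      (cexp (2 * Real.pi * Complex.I * (z + m * τ)) / (1 - cexp (2 * Real.pi * Complex.I * (z + m * τ))))) atTop
      (𝓝 (- (Real.pi * Complex.I) - 2 * Real.pi * Complex.I * (0 / (1 - 0)))) :=
    ((hq.div (hq.const_sub 1) (by simp)).const_mul _).const_sub _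
  simp only [zero_div, mul_zero, sub_zero] at h1
  refine h1.congr' ?_
  filter_upwards [him.eventually_gt_atTop 0] with m hm
  rw [cc_eq (mem_ic_of_im_ne hm.ne')]

lemma cc_tendsto_bot (τ : ℍ) (z : ℂ) :
    Tendsto (fun m : ℤ => cc (z + m * τ)) atBot (𝓝 (Real.pi * Complex.I)) := by
  have := ((cc_tendsto_top τ (-z)).comp tendsto_neg_atBot_atTop).neg
  rw [neg_neg] at this
  refine this.congr fun m => ?_
  simp only [Function.comp]
  rw [← cc_neg]
  congr 1
  push_cast; ring

/-- the torsion point -/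
noncomputable def zz (l : ℕ) (u w : ℤ) (τ : ℂ) : ℂ := (u * τ + w) / l

/-- the summand of the regularised lattice sum -/
noncomputable def ET (l : ℕ) (u w : ℤ) (τ : ℂ) (x : ℤ × ℤ) : ℂ :=
  ((l : ℂ) + 1) * (zz l u w τ + (x.1 * τ + x.2))⁻¹
    - (((l : ℂ) + 1) * zz l u w τ + (x.1 * τ + x.2))⁻¹ - l * (x.1 * τ + x.2)⁻¹

/-- the regularised lattice sum -/
noncomputable def EE (l : ℕ) (u w : ℤ) (τ : ℂ) : ℂ := ∑' x : ℤ × ℤ, ET l u w τ x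

lemma summable_g : Summable fun x : ℤ × ℤ => ‖(![x.1, x.2] : Fin 2 → ℤ)‖ ^ (-(3 : ℝ)) := by
  have := EisensteinSeries.summable_one_div_norm_rpow (k := 3) (by norm_num)
  rw [← (finTwoArrowEquiv ℤ).symm.summable_iff] at this
  exact this

lemma om_lower (τ : ℍ) (x : ℤ × ℤ) :
    EisensteinSeries.r τ * ‖(![x.1, x.2] : Fin 2 → ℤ)‖ ≤ ‖(x.1 * τ + x.2 : ℂ)‖ := by
  by_cases h : (![x.1, x.2] : Fin 2 → ℤ) = 0
  · rw [h]; simp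
  · simpa using EisensteinSeries.r_mul_max_le τ h

lemma tendsto_om (τ : ℍ) : Tendsto (fun x : ℤ × ℤ => ‖(x.1 * τ + x.2 : ℂ)‖) cofinite atTop := by
  have h1 : Tendsto (fun x : Fin 2 → ℤ => ‖x‖) cofinite atTop := by
    rw [← cocompact_eq_cofinite]
    exact tendsto_norm_cocompact_atTop
  have h2 := h1.comp ((finTwoArrowEquiv ℤ).symm.injective.tendsto_cofinite)
  refine tendsto_atTop_mono (om_lower τ) ?_
  exact h2.const_mul_atTop (EisensteinSeries.r_pos τ)

lemma ET_summable (l : ℕ) (u w : ℤ) (τ : ℍ) : Summable (ET l u w τ) := by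
  refine summable_of_isBigO summable_g ?_
  set z := zz l u w τ with hz
  set N : ℝ := (l : ℝ) + 1 with hN
  have hN1 : 1 ≤ N := by rw [hN]; linarith [(Nat.cast_nonneg l : (0 : ℝ) ≤ l)]
  refine Asymptotics.IsBigO.of_bound (4 * N * l * ‖z‖ ^ 2 * (EisensteinSeries.r τ) ^ (-(3 : ℝ))) ?_
  filter_upwards [(tendsto_om τ).eventually_ge_atTop (2 * N * ‖z‖ + 1)] with x hx
  have hrpos := EisensteinSeries.r_pos τ
  have hlow := om_lower τ x
  simp only [ET]
  rw [← hz]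
  set ω : ℂ := x.1 * τ + x.2 with hω
  have hzn := norm_nonneg z
  have hω0 : 0 < ‖ω‖ := by nlinarith [mul_nonneg (zero_le_one.trans hN1) hzn]
  have h1 : ‖ω‖ / 2 ≤ ‖z + ω‖ := by
    have := norm_sub_norm_le ω (-z)
    rw [norm_neg, sub_neg_eq_add, add_comm] at this
    nlinarith
  have hNz : ‖((l : ℂ) + 1) * z‖ = N * ‖z‖ := by
    rw [norm_mul, hN]
    congr 1
    have : ((l : ℂ) + 1) = ((l + 1 : ℕ) : ℂ) := by push_cast; ring
    rw [this, Complex.norm_natCast]; push_cast; ring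
  have h2 : ‖ω‖ / 2 ≤ ‖((l : ℂ) + 1) * z + ω‖ := by
    have := norm_sub_norm_le ω (-(((l : ℂ) + 1) * z))
    rw [norm_neg, sub_neg_eq_add, add_comm ω, hNz] at this
    nlinarith
  have e0 : ω ≠ 0 := norm_pos_iff.mp hω0
  have e1 : z + ω ≠ 0 := norm_pos_iff.mp (by linarith)
  have e2 : ((l : ℂ) + 1) * z + ω ≠ 0 := norm_pos_iff.mp (by linarith)
  have e : ((l : ℂ) + 1) * (z + ω)⁻¹ - (((l : ℂ) + 1) * z + ω)⁻¹ - l * ω⁻¹ =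
      - (((l : ℂ) + 1) * z) * (l * z) / (ω * (z + ω) * (((l : ℂ) + 1) * z + ω)) := by
    field_simp
    ring
  rw [e, norm_div, norm_mul, norm_neg, hNz, norm_mul, norm_mul, norm_mul, Complex.norm_natCast]
  have hg0 : 0 ≤ ‖(![x.1, x.2] : Fin 2 → ℤ)‖ := norm_nonneg _
  have hgpos : 0 < ‖(![x.1, x.2] : Fin 2 → ℤ)‖ := by
    refine norm_pos_iff.mpr fun h => e0 ?_
    have h0 := congrFun h 0
    have h1 := congrFun h 1
    simp at h0 h1
    simp [hω, h0, h1]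
  rw [Real.norm_of_nonneg (Real.rpow_nonneg hg0 _)]
  have hb : N * ‖z‖ * (l * ‖z‖) / (‖ω‖ * ‖z + ω‖ * ‖((l : ℂ) + 1) * z + ω‖) ≤
     N * ‖z‖ * (l * ‖z‖) / (‖ω‖ * (‖ω‖ / 2) * (‖ω‖ / 2)) := by
    gcongr
  refine hb.trans ?_
  have hc : N * ‖z‖ * (l * ‖z‖) / (‖ω‖ * (‖ω‖ / 2) * (‖ω‖ / 2)) =
      4 * N * l * ‖z‖ ^ 2 * (‖ω‖ ^ 3)⁻¹ := by
    field_simp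
    ring
  rw [hc, mul_assoc (4 * N * l * ‖z‖ ^ 2), ← Real.mul_rpow hrpos.le hg0, Real.rpow_neg (by positivity)]
  norm_cast
  gcongr

lemma tendsto_Icc_symm : Tendsto (fun M : ℕ => Finset.Icc (-(M : ℤ)) M) atTop atTop := by
  refine tendsto_atTop_finset_of_monotone ?_ ?_
  · intro a b hab
    refine Finset.Icc_subset_Icc ?_ ?_ <;> simpa
  · intro x
    refine ⟨x.natAbs, ?_⟩
    simp only [Finset.mem_Icc]
    omega

lemma zz_mem {l : ℕ} (hl : 0 < l) {u w : ℤ} (h : ¬ ((l : ℤ) ∣ u ∧ (l : ℤ) ∣ w)) (τ : ℍ) (m : ℤ) :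
    zz l u w τ + m * τ ∈ integerComplement := by
  rintro ⟨k, hk⟩
  apply h
  have hl' : (l : ℂ) ≠ 0 := by exact_mod_cast hl.ne'
  have h1 : ((u + l * m : ℤ) : ℂ) * τ + ((w - l * k : ℤ) : ℂ) = 0 := by
    simp only [zz] at hk
    field_simp at hk
    push_cast
    linear_combination -hk
  have him := congrArg Complex.im h1
  simp only [Complex.add_im, Complex.mul_im, Complex.intCast_im, Complex.intCast_re, zero_mul,
    add_zero, Complex.zero_im] at him
  have h2 : ((u + l * m : ℤ) : ℝ) = 0 := by
    rcases mul_eq_zero.mp him with h | h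
    · exact h
    · exact absurd h τ.im_pos.ne'
  have h3 : u + l * m = 0 := by exact_mod_cast h2
  rw [h3] at h1
  have h4 : w - l * k = 0 := by
    simp only [Int.cast_zero, zero_mul, zero_add] at h1
    exact_mod_cast h1
  exact ⟨⟨-m, by linarith⟩, ⟨k, by linarith⟩⟩

lemma mul_tau_mem (τ : ℍ) (m : ℤ) : (m * τ : ℂ) ∈ integerComplement ∨ (m * τ : ℂ) = 0 := by
  by_cases h : m = 0
  · right; simp [h]
  · left
    apply mem_ic_of_im_ne
    simp [h, τ.im_pos.ne']

lemma mul_zz {l : ℕ} (hl : 0 < l) (u w : ℤ) (τ : ℂ) :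
    ((l : ℂ) + 1) * zz l u w τ = zz l u w τ + u * τ + w := by
  have hl' : (l : ℂ) ≠ 0 := by exact_mod_cast hl.ne'
  simp only [zz]
  field_simp
  ring

lemma ET_row {l : ℕ} (hl : 0 < l) {u w : ℤ} (h : ¬ ((l : ℤ) ∣ u ∧ (l : ℤ) ∣ w)) (τ : ℍ) (m : ℤ) :
    HasSum (fun n : ℤ => ET l u w τ (m, n))
      (((l : ℂ) + 1) * cc (zz l u w τ + m * τ) - cc (zz l u w τ + (m + u : ℤ) * τ)
        - l * cc (m * τ)) := by
  have hs : Summable (fun n : ℤ => ET l u w τ (m, n)) :=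
    (ET_summable l u w τ).comp_injective (Prod.mk_right_injective m)
  have h1 := hs.hasSum
  have h2 := h1.comp tendsto_Icc_symm
  have a1 := (cc_tendsto (Or.inl (zz_mem hl h τ m))).const_mul ((l : ℂ) + 1)
  have a2 := cc_tendsto (x := zz l u w τ + (m + u : ℤ) * τ + w)
    (Or.inl ((add_intCast_mem_integerComplement w).mpr (zz_mem hl h τ (m + u))))
  rw [cc_add_int] at a2
  have a3 := (cc_tendsto (mul_tau_mem τ m)).const_mul (l : ℂ)
  have h3 := (a1.sub a2).sub a3
  have h4 := tendsto_nhds_unique h2 (h3.congr fun M => ?_)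
  · rw [← h4]; exact h1
  · simp only [Function.comp, Finset.mul_sum, ← Finset.sum_sub_distrib]
    refine Finset.sum_congr rfl fun n _ => ?_
    simp only [ET]
    rw [mul_zz hl]
    push_cast
    ring_nf

lemma EE_tendsto {l : ℕ} (hl : 0 < l) {u w : ℤ} (h : ¬ ((l : ℤ) ∣ u ∧ (l : ℤ) ∣ w)) (τ : ℍ) :
    Tendsto (fun M : ℕ => l * ∑ m ∈ Finset.Icc (-(M : ℤ)) M, cc (zz l u w τ + m * τ)) atTop
      (𝓝 (EE l u w τ - 2 * Real.pi * Complex.I * u)) := by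
  have h1 := (ET_summable l u w τ).hasSum.prod_fiberwise (ET_row hl h τ)
  have h2 := h1.comp tendsto_Icc_symm
  have h3 := tendsto_tele (cc_tendsto_top τ (zz l u w τ)) (cc_tendsto_bot τ (zz l u w τ)) u
  have h4 := h2.add h3
  have h5 (M : ℕ) : ∑ m ∈ Finset.Icc (-(M : ℤ)) M, cc (m * τ) = 0 := by
    rw [sum_symm]
    simp only [Int.cast_zero, zero_mul, cc_zero, zero_add]
    refine Finset.sum_eq_zero fun k _ => ?_
    have : ((-((k : ℤ) + 1) : ℤ) * τ : ℂ) = - (((k : ℤ) + 1 : ℤ) * τ) := by push_cast; ring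
    rw [this, cc_neg, add_neg_cancel]
  have h6 : EE l u w τ - 2 * Real.pi * Complex.I * u =
      EE l u w τ + u * (-(Real.pi * Complex.I) - Real.pi * Complex.I) := by ring
  rw [h6]
  refine h4.congr fun M => ?_
  simp only [Function.comp, Finset.sum_sub_distrib, ← Finset.mul_sum, h5]
  ring

lemma EE_add_u {l : ℕ} (hl : 0 < l) {u w : ℤ} (h : ¬ ((l : ℤ) ∣ u ∧ (l : ℤ) ∣ w)) (τ : ℍ) (k : ℤ) :
    EE l (u + l * k) w τ = EE l u w τ := by
  have hl' : (l : ℂ) ≠ 0 := by exact_mod_cast hl.ne'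
  have h' : ¬ ((l : ℤ) ∣ (u + l * k) ∧ (l : ℤ) ∣ w) := by
    rwa [Int.dvd_add_left (dvd_mul_right _ _)]
  have h1 := EE_tendsto hl h τ
  have h2 := EE_tendsto hl h' τ
  have h3 := (tendsto_tele (cc_tendsto_top τ (zz l u w τ)) (cc_tendsto_bot τ (zz l u w τ)) k).const_mul (l : ℂ)
  have h4 := tendsto_nhds_unique h2 ((h1.add h3).congr fun M => ?_)
  · push_cast at h4
    linear_combination h4
  · rw [← mul_add, ← Finset.sum_add_distrib]
    congr 1
    refine Finset.sum_congr rfl fun m _ => ?_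
    have : zz l (u + l * k) w τ + m * τ = zz l u w τ + (m + k : ℤ) * τ := by
      simp only [zz]; push_cast; field_simp; ring
    rw [this]; ring

lemma EE_add_w {l : ℕ} (hl : 0 < l) {u w : ℤ} (h : ¬ ((l : ℤ) ∣ u ∧ (l : ℤ) ∣ w)) (τ : ℍ) (k : ℤ) :
    EE l u (w + l * k) τ = EE l u w τ := by
  have hl' : (l : ℂ) ≠ 0 := by exact_mod_cast hl.ne'
  have h' : ¬ ((l : ℤ) ∣ u ∧ (l : ℤ) ∣ (w + l * k)) := by
    rwa [Int.dvd_add_left (dvd_mul_right _ _)]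
  have h1 := EE_tendsto hl h τ
  have h2 := EE_tendsto hl h' τ
  have h4 := tendsto_nhds_unique h2 (h1.congr fun M => ?_)
  · linear_combination h4
  · congr 1
    refine Finset.sum_congr rfl fun m _ => ?_
    have : zz l u (w + l * k) τ + m * τ = zz l u w τ + m * τ + (k : ℤ) := by
      simp only [zz]; push_cast; field_simp; ring
    rw [this, cc_add_int]

lemma EE_slash (l : ℕ) (u w : ℤ) (τ : ℂ) (p q r t : ℤ) (hdet : p * t - q * r = 1)
    (hd : (r * τ + t : ℂ) ≠ 0) :
    EE l u w ((p * τ + q) / (r * τ + t)) =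
      (r * τ + t) * EE l (u * p + w * r) (u * q + w * t) τ := by
  let e : ℤ × ℤ ≃ ℤ × ℤ :=
    { toFun := fun x => (x.1 * p + x.2 * r, x.1 * q + x.2 * t)
      invFun := fun x => (x.1 * t - x.2 * r, - x.1 * q + x.2 * p)
      left_inv := by
        rintro ⟨x, y⟩
        ext
        · simp only; linear_combination x * hdet
        · simp only; linear_combination y * hdet
      right_inv := by
        rintro ⟨x, y⟩
        ext
        · simp only; linear_combination x * hdet
        · simp only; linear_combination y * hdet }
  rw [EE, EE, ← e.tsum_eq (ET l (u * p + w * r) (u * q + w * t) τ), ← tsum_mul_left]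
  congr 1
  ext x
  have hx : (x.1 * ((p * τ + q) / (r * τ + t)) + x.2 : ℂ) =
      ((e x).1 * τ + (e x).2) / (r * τ + t) := by
    simp only [e, Equiv.coe_fn_mk]
    push_cast
    rw [eq_div_iff hd, add_mul, mul_assoc, div_mul_cancel₀ _ hd]
    ring
  have hz : zz l u w ((p * τ + q) / (r * τ + t)) =
      zz l (u * p + w * r) (u * q + w * t) τ / (r * τ + t) := by
    simp only [zz]
    push_cast
    rw [div_right_comm]
    congr 1
    rw [eq_div_iff hd, add_mul, mul_assoc, div_mul_cancel₀ _ hd]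
    ring
  simp only [ET]
  rw [hx, hz, ← mul_div_assoc, ← add_div, ← add_div, inv_div, inv_div, inv_div]
  ring

/-- bound for the exponentially small tails -/
noncomputable def BB (l : ℕ) (k : ℕ) : ℝ :=
  2 * Real.pi * (Real.exp (-(2 * Real.pi * ((k + 1) / l))) /
    (1 - Real.exp (-(2 * Real.pi * ((k + 1) / l)))))

lemma BB_summable {l : ℕ} (hl : 0 < l) : Summable (BB l) := by
  have hl' : (0 : ℝ) < l := by exact_mod_cast hl
  have hr : Real.exp (-(2 * Real.pi / l)) < 1 := by
    rw [Real.exp_lt_one_iff]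
    have : 0 < 2 * Real.pi / l := by positivity
    linarith
  have h1 := summable_norm_pow_mul_geometric_div_one_sub 0 (r := Real.exp (-(2 * Real.pi / l)))
    (by rwa [Real.norm_of_nonneg (Real.exp_pos _).le])
  have h2 := ((summable_nat_add_iff 1).mpr h1).mul_left (2 * Real.pi)
  refine h2.congr fun k => ?_
  rw [BB, pow_zero, one_mul, ← Real.exp_nat_mul]
  push_cast
  have : ((k : ℝ) + 1) * -(2 * Real.pi / l) = -(2 * Real.pi * ((k + 1) / l)) := by ring
  rw [this]

lemma BB_nonneg {l : ℕ} (hl : 0 < l) (k : ℕ) : 0 ≤ BB l k := by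
  have hl' : (0 : ℝ) < l := by exact_mod_cast hl
  have hr : Real.exp (-(2 * Real.pi * ((k + 1) / l))) ≤ 1 := by
    rw [Real.exp_le_one_iff]
    have : 0 < 2 * Real.pi * ((k + 1) / l) := by positivity
    linarith
  have := sub_nonneg.mpr hr
  have := Real.pi_pos
  unfold BB
  positivity

lemma EE_bdd_aux {l : ℕ} (hl : 0 < l) {u w : ℤ} (h : ¬ ((l : ℤ) ∣ u ∧ (l : ℤ) ∣ w))
    (hu0 : 0 ≤ u) (hul : u < l) :
    ∃ K : ℝ, ∀ τ : ℍ, 1 ≤ τ.im → ‖EE l u w τ‖ ≤ K := by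
  have hl' : (0 : ℝ) < l := by exact_mod_cast hl
  have hl1 : (1 : ℝ) ≤ l := by exact_mod_cast hl
  set K0 := ‖cc (w / l)‖ + BB l 0 + Real.pi with hK0
  refine ⟨‖(2 * Real.pi * Complex.I * u : ℂ)‖ + l * (K0 + 2 * ∑' k, BB l k), fun τ hτ => ?_⟩
  have h1 := (EE_tendsto hl h τ).norm
  have hpi : ‖(Real.pi * Complex.I : ℂ)‖ = Real.pi := by simp [abs_of_pos Real.pi_pos]
  have him : (zz l u w τ).im = u / l * τ.im := by
    have : zz l u w τ = (u / l : ℝ) * τ + (w / l : ℝ) := by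
      simp only [zz]; push_cast; ring
    rw [this]
    simp
  have hu0' : (0 : ℝ) ≤ u := by exact_mod_cast hu0
  have hul' : (u : ℝ) ≤ l - 1 := by
    have : u ≤ (l : ℤ) - 1 := by omega
    exact_mod_cast this
  have h0 : ‖cc (zz l u w τ)‖ ≤ K0 := by
    rcases hu0.eq_or_lt with h | h
    · have : zz l u w τ = w / l := by simp [zz, ← h]
      rw [this, hK0]
      have := BB_nonneg hl 0
      have := Real.pi_pos
      linarith
    · have hu1 : (1 : ℝ) ≤ u := by exact_mod_cast h
      have := cc_bound (x := zz l u w τ) (y := ((0 : ℕ) + 1) / l) (by positivity) (by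
        rw [him]
        have : (1 : ℝ) / l ≤ u / l := by gcongr
        have h2 : (0 : ℝ) ≤ u / l := by positivity
        simp only [Nat.cast_zero, zero_add]
        nlinarith)
      rw [← BB] at this
      have h3 : cc (zz l u w τ) = (cc (zz l u w τ) + Real.pi * Complex.I) - Real.pi * Complex.I := by
        ring
      rw [h3]
      refine (norm_sub_le _ _).trans ?_
      rw [hpi, hK0]
      have := norm_nonneg (cc (w / l))
      linarith
  have hk (k : ℕ) : ‖cc (zz l u w τ + ((k : ℤ) + 1 : ℤ) * τ) + cc (zz l u w τ + (-((k : ℤ) + 1) : ℤ) * τ)‖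
      ≤ 2 * BB l k := by
    have hk0 : (0 : ℝ) ≤ k := Nat.cast_nonneg k
    have a1 := cc_bound (x := zz l u w τ + ((k : ℤ) + 1 : ℤ) * τ) (y := (k + 1) / l)
      (by positivity) (by
        rw [Complex.add_im, him]
        simp only [Int.cast_add, Int.cast_natCast, Int.cast_one, Complex.mul_im, Complex.add_re,
          Complex.natCast_re, Complex.one_re, Complex.add_im, Complex.natCast_im, Complex.one_im,
          add_zero, zero_mul, UpperHalfPlane.coe_im]
        have e1 : ((k : ℝ) + 1) / l ≤ k + 1 := div_le_self (by positivity) hl1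
        have e2 : 0 ≤ (u : ℝ) / l * τ.im := by positivity
        nlinarith)
    have a2 := cc_bound (x := -zz l u w τ + ((k : ℤ) + 1 : ℤ) * τ) (y := (k + 1) / l)
      (by positivity) (by
        rw [Complex.add_im, Complex.neg_im, him]
        simp only [Int.cast_add, Int.cast_natCast, Int.cast_one, Complex.mul_im, Complex.add_re,
          Complex.natCast_re, Complex.one_re, Complex.add_im, Complex.natCast_im, Complex.one_im,
          add_zero, zero_mul, UpperHalfPlane.coe_im]
        have e1 : ((k : ℝ) + 1) / l ≤ (k + 1) - u / l := by
          rw [div_le_iff₀ hl', sub_mul, div_mul_cancel₀ _ hl'.ne']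
          nlinarith
        have e2 : 0 ≤ ((k : ℝ) + 1) / l := by positivity
        nlinarith)
    rw [← BB] at a1 a2
    have e : zz l u w τ + (-((k : ℤ) + 1) : ℤ) * τ = - (-zz l u w τ + ((k : ℤ) + 1 : ℤ) * τ) := by
      push_cast; ring
    rw [e, cc_neg]
    have e' : cc (zz l u w τ + ((k : ℤ) + 1 : ℤ) * τ) + -cc (-zz l u w τ + ((k : ℤ) + 1 : ℤ) * τ) =
      (cc (zz l u w τ + ((k : ℤ) + 1 : ℤ) * τ) + Real.pi * Complex.I) -
        (cc (-zz l u w τ + ((k : ℤ) + 1 : ℤ) * τ) + Real.pi * Complex.I) := by ring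
    rw [e']
    refine (norm_sub_le _ _).trans ?_
    linarith
  have h2 : ‖EE l u w τ - 2 * Real.pi * Complex.I * u‖ ≤ l * (K0 + 2 * ∑' k, BB l k) := by
    refine le_of_tendsto' h1 fun M => ?_
    rw [norm_mul, Complex.norm_natCast, sum_symm]
    gcongr
    refine (norm_add_le _ _).trans (add_le_add ?_ ?_)
    · simpa using h0
    · refine (norm_sum_le _ _).trans ((Finset.sum_le_sum fun k _ => hk k).trans ?_)
      rw [← Finset.mul_sum]
      gcongr
      exact (BB_summable hl).sum_le_tsum _ fun k _ => BB_nonneg hl k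
  have h3 : EE l u w τ = 2 * Real.pi * Complex.I * u +
    (EE l u w τ - 2 * Real.pi * Complex.I * u) := by ring
  rw [h3]
  exact (norm_add_le _ _).trans (by linarith)

lemma EE_bdd {l : ℕ} (hl : 0 < l) {u w : ℤ} (h : ¬ ((l : ℤ) ∣ u ∧ (l : ℤ) ∣ w)) :
    ∃ K : ℝ, ∀ τ : ℍ, 1 ≤ τ.im → ‖EE l u w τ‖ ≤ K := by
  have hl' : (0 : ℤ) < l := by exact_mod_cast hl
  have hu : u % l + l * (u / l) = u := Int.emod_add_mul_ediv u l
  have h' : ¬ ((l : ℤ) ∣ (u % l) ∧ (l : ℤ) ∣ w) := by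
    rintro ⟨h1, h2⟩
    have h3 := dvd_add h1 (dvd_mul_right (l : ℤ) (u / l))
    rw [hu] at h3
    exact h ⟨h3, h2⟩
  obtain ⟨K, hK⟩ := EE_bdd_aux hl h' (Int.emod_nonneg _ hl'.ne') (Int.emod_lt_of_pos _ hl')
  refine ⟨K, fun τ hτ => ?_⟩
  have := EE_add_u hl h' τ (u / l)
  rw [hu] at this
  rw [this]
  exact hK τ hτ

lemma cc_eq' {x : ℂ} (hx : x ∈ integerComplement) :
    cc x = Real.pi * Complex.I - 2 * Real.pi * Complex.I * (1 - cexp (2 * Real.pi * Complex.I * x))⁻¹ := by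
  have h := sub_ne_zero.mpr (exp_ne_one hx).symm
  rw [cc_eq hx]
  generalize cexp (2 * Real.pi * Complex.I * x) = q at *
  field_simp
  ring

lemma cc_distrib {l : ℕ} (hl : 0 < l) {x : ℂ} (hx : x.im ≠ 0) :
    ∑ j ∈ Finset.range l, cc ((x + j) / l) = l * cc x := by
  have hl' : (l : ℂ) ≠ 0 := by exact_mod_cast hl.ne'
  have hlr : (l : ℝ) ≠ 0 := by exact_mod_cast hl.ne'
  set q := cexp (2 * Real.pi * Complex.I * x) with hq
  have hq1 : (1 - q) ≠ 0 := sub_ne_zero.mpr (exp_ne_one (mem_ic_of_im_ne hx)).symm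
  set Q := cexp (2 * Real.pi * Complex.I * (x / l)) with hQ
  set ζ := cexp (2 * Real.pi * Complex.I / l) with hζ
  have hprim : IsPrimitiveRoot ζ l := Complex.isPrimitiveRoot_exp l hl.ne'
  have hQl : Q ^ l = q := by
    rw [hQ, hq, ← Complex.exp_nat_mul]
    congr 1
    field_simp
  have hterm (j : ℕ) : cc ((x + j) / l) = Real.pi * Complex.I -
      2 * Real.pi * Complex.I * ((∑ k ∈ Finset.range l, Q ^ k * (ζ ^ k) ^ j) * (1 - q)⁻¹) := by
    have him : ((x + j) / l).im ≠ 0 := by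
      have : (x + j) / l = ((1 / l : ℝ) : ℂ) * (x + j) := by push_cast; ring
      rw [this, Complex.re_ofReal_mul |> fun _ => Complex.im_ofReal_mul]
      simp [hx, hlr]
    have hm := mem_ic_of_im_ne him
    have hne := sub_ne_zero.mpr (exp_ne_one hm).symm
    rw [cc_eq' hm]
    have he : cexp (2 * Real.pi * Complex.I * ((x + j) / l)) = Q * ζ ^ j := by
      rw [hQ, hζ, ← Complex.exp_nat_mul, ← Complex.exp_add]
      congr 1
      field_simp
    rw [he] at hne ⊢
    congr 2
    have hg := mul_neg_geom_sum (Q * ζ ^ j) l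
    have hl1 : (Q * ζ ^ j) ^ l = q := by
      rw [mul_pow, hQl, ← pow_mul, mul_comm j l, pow_mul, hprim.pow_eq_one, one_pow, mul_one]
    rw [hl1] at hg
    rw [← div_eq_mul_inv, eq_div_iff hq1, ← hg, inv_mul_cancel_left₀ hne]
    refine Finset.sum_congr rfl fun k _ => ?_
    rw [mul_pow, ← pow_mul, ← pow_mul, mul_comm j k]
  have hsum : ∑ j ∈ Finset.range l, ∑ k ∈ Finset.range l, Q ^ k * (ζ ^ k) ^ j = l := by
    rw [Finset.sum_comm]
    simp_rw [← Finset.mul_sum]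
    rw [Finset.sum_eq_single 0]
    · simp
    · intro k hk hk0
      have hne : ζ ^ k ≠ 1 := hprim.pow_ne_one_of_pos_of_lt hk0 (Finset.mem_range.mp hk)
      have hg := mul_neg_geom_sum (ζ ^ k) l
      rw [← pow_mul, mul_comm k l, pow_mul, hprim.pow_eq_one, one_pow, sub_self] at hg
      rw [(mul_eq_zero.mp hg).resolve_left (sub_ne_zero.mpr hne.symm), mul_zero]
    · intro h
      exact absurd (Finset.mem_range.mpr hl) h
  simp_rw [hterm]
  rw [Finset.sum_sub_distrib, Finset.sum_const, ← Finset.mul_sum, ← Finset.sum_mul, hsum,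
    cc_eq' (mem_ic_of_im_ne hx)]
  simp
  ring

lemma lambert (χ : ℕ → ℂ) (hχ : ∀ d, ‖χ d‖ ≤ 1) {q : ℂ} (hq : ‖q‖ < 1) :
    ∑' d : ℕ, χ d * (q ^ d / (1 - q ^ d)) = ∑' n : ℕ, q ^ n * ∑ d ∈ n.divisors, χ d := by
  have hs : Summable fun c : ℕ+ × ℕ+ => χ c.1 * q ^ (c.1 * c.2 : ℕ) := by
    have h0 := (summable_prod_mul_pow 0 hq).norm
    refine Summable.of_norm_bounded h0 fun c => ?_
    rw [norm_mul, norm_mul]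
    gcongr
    simpa using hχ c.1
  have hL : ∑' c : ℕ+ × ℕ+, χ c.1 * q ^ (c.1 * c.2 : ℕ) =
      ∑' d : ℕ+, χ d * (q ^ (d : ℕ) / (1 - q ^ (d : ℕ))) := by
    rw [hs.tsum_prod]
    refine tsum_congr fun d => ?_
    simp only []
    rw [tsum_mul_left]
    congr 1
    have hqd : ‖q ^ (d : ℕ)‖ < 1 := by
      rw [norm_pow]; exact pow_lt_one₀ (norm_nonneg _) hq d.ne_zero
    have h1 := tsum_geometric_of_norm_lt_one hqd
    have h2 := tsum_pnat_eq_tsum_succ (f := fun m => (q ^ (d : ℕ)) ^ m)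
    simp only [pow_mul]
    rw [h2]
    simp_rw [pow_succ']
    rw [tsum_mul_left, h1, div_eq_mul_inv]
  have hR : ∑' c : ℕ+ × ℕ+, χ c.1 * q ^ (c.1 * c.2 : ℕ) =
      ∑' n : ℕ+, q ^ (n : ℕ) * ∑ d ∈ (n : ℕ).divisors, χ d := by
    rw [← sigmaAntidiagonalEquivProd.tsum_eq]
    refine (Summable.tsum_sigma (sigmaAntidiagonalEquivProd.summable_iff.mpr hs)).trans ?_
    simp only [Function.comp_apply]
    refine tsum_congr fun n => ?_
    rw [tsum_fintype]
    have : ∀ b : { x // x ∈ (n : ℕ).divisorsAntidiagonal },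
        χ (sigmaAntidiagonalEquivProd ⟨n, b⟩).1 *
          q ^ ((sigmaAntidiagonalEquivProd ⟨n, b⟩).1 * (sigmaAntidiagonalEquivProd ⟨n, b⟩).2 : ℕ) =
        χ b.1.1 * q ^ (b.1.1 * b.1.2) := fun b => rfl
    simp_rw [this]
    rw [Finset.univ_eq_attach, (n : ℕ).divisorsAntidiagonal.sum_attach fun x : ℕ × ℕ ↦ χ x.1 * q ^ (x.1 * x.2),
      Nat.sum_divisorsAntidiagonal fun x y ↦ χ x * q ^ (x * y), Finset.mul_sum]
    refine Finset.sum_congr rfl fun i hi => ?_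
    rw [Nat.mul_div_cancel' (Nat.dvd_of_mem_divisors hi), mul_comm]
  rw [tsum_pnat_eq_tsum_succ (f := fun d => χ d * (q ^ (d : ℕ) / (1 - q ^ (d : ℕ))))] at hL
  rw [tsum_pnat_eq_tsum_succ (f := fun n => q ^ (n : ℕ) * ∑ d ∈ (n : ℕ).divisors, χ d)] at hR
  have z1 (f : ℕ → ℂ) (h0 : f 0 = 0) : ∑' n, f n = ∑' n, f (n + 1) := by
    symm
    apply Function.Injective.tsum_eq (add_left_injective 1)
    intro n hn
    rcases n with _ | n
    · exact absurd h0 hn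
    · exact ⟨n, rfl⟩
  rw [z1 _ (by simp), z1 (fun n => q ^ n * ∑ d ∈ n.divisors, χ d) (by simp), ← hL, hR]

lemma el_summable {q : ℂ} (hq : ‖q‖ < 1) : Summable fun n : ℕ => q ^ n / (1 - q ^ n) := by
  refine (summable_norm_pow_mul_geometric_div_one_sub 0 hq).congr fun n => ?_
  simp

lemma ap_tsum {l B : ℕ} (hB : B < l) (f : ℕ → ℂ) :
    ∑' d : ℕ, (if ((d : ℤ) : ZMod l) = ((B : ℤ) : ZMod l) then (1 : ℂ) else 0) * f d =
      ∑' k : ℕ, f (B + l * k) := by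
  have hl : 0 < l := by omega
  have hinj : Function.Injective fun k : ℕ => B + l * k := by
    intro x y h
    simp only [add_right_inj] at h
    exact Nat.eq_of_mul_eq_mul_left hl h
  rw [← hinj.tsum_eq]
  · refine tsum_congr fun k => ?_
    simp
  · intro d hd
    have : ((d : ℤ) : ZMod l) = ((B : ℤ) : ZMod l) := by
      by_contra hne
      apply hd
      simp only [if_neg hne, zero_mul]
    rw [Int.cast_natCast, Int.cast_natCast, ZMod.natCast_eq_natCast_iff'] at this
    rw [Nat.mod_eq_of_lt hB] at this
    exact ⟨d / l, by rw [← this]; exact Nat.mod_add_div d l⟩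

lemma ap_summable {l : ℕ} (hl : 0 < l) (B : ℕ) {f : ℕ → ℂ} (hf : Summable f) :
    Summable fun k : ℕ => f (B + l * k) := by
  have hinj : Function.Injective fun k : ℕ => B + l * k := by
    intro x y h
    simp only [add_right_inj] at h
    exact Nat.eq_of_mul_eq_mul_left hl h
  exact hf.comp_injective hinj

lemma ind_summable (P : ℕ → Prop) [DecidablePred P] {f : ℕ → ℂ} (hf : Summable f) :
    Summable fun d : ℕ => (if P d then (1 : ℂ) else 0) * f d := by
  refine Summable.of_norm_bounded hf.norm fun d => ?_
  split_ifs <;> simp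

/-- the odd character-like weight -/
noncomputable def ch (l : ℕ) (a : ℤ) (d : ℕ) : ℂ :=
  (if ((d : ℤ) : ZMod l) = (a : ZMod l) then (1 : ℂ) else 0) -
    (if ((d : ℤ) : ZMod l) = (-(a : ZMod l)) then (1 : ℂ) else 0)

lemma ch_norm (l : ℕ) (a : ℤ) (d : ℕ) : ‖ch l a d‖ ≤ 1 := by
  unfold ch
  split_ifs <;> simp

lemma cc_nat (τ : ℍ) {n : ℕ} (hn : 0 < n) :
    cc (n * τ) = -(Real.pi * Complex.I) - 2 * Real.pi * Complex.I *
      (cexp (2 * Real.pi * Complex.I * τ) ^ n / (1 - cexp (2 * Real.pi * Complex.I * τ) ^ n)) := by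
  have hn' : (n : ℝ) ≠ 0 := by exact_mod_cast hn.ne'
  have him : ((n : ℂ) * τ).im ≠ 0 := by
    simp [hn.ne', τ.im_ne_zero]
  rw [cc_eq (mem_ic_of_im_ne him), ← Complex.exp_nat_mul]
  have : (2 * Real.pi * Complex.I * (n * τ) : ℂ) = n * (2 * Real.pi * Complex.I * τ) := by ring
  rw [this]

lemma q_norm (τ : ℍ) : ‖cexp (2 * Real.pi * Complex.I * τ)‖ < 1 := by
  rw [norm_exp_2pi, Real.exp_lt_one_iff, UpperHalfPlane.coe_im]
  have := τ.im_pos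
  have := Real.pi_pos
  have : 0 < 2 * Real.pi * τ.im := by positivity
  linarith

lemma cc_sum_tendsto {l A : ℕ} (hA : 0 < A) (hAl : A < l) (τ : ℍ) :
    Tendsto (fun M : ℕ => ∑ m ∈ Finset.Icc (-(M : ℤ)) M, cc (((A : ℂ) + l * m) * τ)) atTop
      (𝓝 (-(Real.pi * Complex.I) - 2 * Real.pi * Complex.I *
        ∑' n : ℕ, cexp (2 * Real.pi * Complex.I * τ) ^ n * ∑ d ∈ n.divisors, ch l A d)) := by
  have hl : 0 < l := by omega
  have hq := q_norm τ
  have hel := el_summable hq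
  rw [← lambert (ch l A) (ch_norm l A) hq]
  have hcc (n : ℕ) (hn : 0 < n) := cc_nat τ hn
  generalize cexp (2 * Real.pi * Complex.I * τ) = q at *
  set el : ℕ → ℂ := fun n => q ^ n / (1 - q ^ n) with hel'
  have hsum : ∑' d : ℕ, ch l A d * (q ^ d / (1 - q ^ d)) =
      (∑' k : ℕ, el (A + l * k)) - ∑' k : ℕ, el ((l - A) + l * k) := by
    rw [← ap_tsum hAl, ← ap_tsum (show l - A < l by omega), ← (ind_summable _ hel).tsum_sub (ind_summable _ hel)]
    refine tsum_congr fun d => ?_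
    rw [ch, sub_mul]
    have : (((l - A : ℕ) : ℤ) : ZMod l) = -((A : ℤ) : ZMod l) := by
      rw [Nat.cast_sub hAl.le]
      simp
    rw [this]
  rw [hsum]
  have t1 := ((ap_summable hl A hel).hasSum.tendsto_sum_nat).comp (tendsto_add_atTop_nat 1)
  have t2 := (ap_summable hl (l - A) hel).hasSum.tendsto_sum_nat
  refine (((t1.sub t2).const_mul (2 * Real.pi * Complex.I)).const_sub (-(Real.pi * Complex.I))).congr
    fun M => ?_
  rw [sum_symm]
  simp only [Function.comp_apply]
  rw [Finset.sum_range_succ']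
  have hterm (k : ℕ) : cc (((A : ℂ) + l * ((k : ℤ) + 1 : ℤ)) * τ) + cc (((A : ℂ) + l * (-((k : ℤ) + 1) : ℤ)) * τ)
      = - (2 * Real.pi * Complex.I) * (el (A + l * (k + 1)) - el ((l - A) + l * k)) := by
    have e1 : ((A : ℂ) + l * ((k : ℤ) + 1 : ℤ)) * τ = ((A + l * (k + 1) : ℕ) : ℂ) * τ := by
      push_cast; ring
    have e2 : ((A : ℂ) + l * (-((k : ℤ) + 1) : ℤ)) * τ = -((((l - A) + l * k : ℕ) : ℂ) * τ) := by
      push_cast [Nat.cast_sub hAl.le]; ring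
    rw [e1, e2, cc_neg, hcc _ (by omega), hcc _ (by omega)]
    ring
  simp_rw [hterm]
  rw [← Finset.mul_sum, Finset.sum_sub_distrib]
  have e0 : ((A : ℂ) + l * (0 : ℤ)) * τ = (A : ℂ) * τ := by simp
  rw [e0, hcc A hA]
  simp only [mul_zero, add_zero, hel']
  ring

lemma sE_eq_of_lt {l A : ℕ} (hA : 0 < A) (hAl : A < l) (τ : ℍ) :
    ∑ j ∈ Finset.range l, EE l A j τ = l ^ 2 * (-(2 * Real.pi * Complex.I)) * sE l A τ := by
  have hl : 0 < l := by omega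
  have hl' : (l : ℂ) ≠ 0 := by exact_mod_cast hl.ne'
  have hlr : (l : ℝ) ≠ 0 := by exact_mod_cast hl.ne'
  have hnd : ¬ ((l : ℤ) ∣ (A : ℤ)) := by
    rw [Int.natCast_dvd_natCast]
    exact Nat.not_dvd_of_pos_of_lt hA hAl
  have h1 := tendsto_finsetSum (Finset.range l) fun j (_ : j ∈ Finset.range l) =>
    EE_tendsto hl (u := A) (w := j) (fun h => hnd h.1) τ
  have h2 := (cc_sum_tendsto hA hAl τ).const_mul ((l : ℂ) ^ 2)
  have h3 := tendsto_nhds_unique (h1.congr fun M => ?_) h2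
  · rw [Finset.sum_sub_distrib, Finset.sum_const] at h3
    have hz : ¬ (((A : ℤ) : ZMod l) = 0) := by
      rwa [ZMod.intCast_zmod_eq_zero_iff_dvd]
    rw [sE, if_neg hz]
    have hfr : Int.fract (((A : ℤ) : ℝ) / (l : ℝ)) = A / l := by
      rw [Int.fract_eq_self.mpr]
      · simp
      · have : (A : ℝ) < l := by exact_mod_cast hAl
        have hlp : (0 : ℝ) < l := by exact_mod_cast hl
        constructor
        · simp only [Int.cast_natCast]; positivity
        · rw [div_lt_one hlp]; simpa using this
    rw [hfr]
    have hq (n : ℕ) : cexp (2 * Real.pi * Complex.I * (n : ℂ) * (τ : ℂ)) =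
        cexp (2 * Real.pi * Complex.I * τ) ^ n := by
      rw [← Complex.exp_nat_mul]
      congr 1
      ring
    simp_rw [hq]
    simp_rw [ch] at h3
    rw [sub_eq_iff_eq_add] at h3
    rw [h3]
    simp only [Finset.card_range, nsmul_eq_mul]
    push_cast
    generalize (tsum (α := ℂ) _ _ : ℂ) = S
    field_simp
    ring
  · rw [← Finset.mul_sum, Finset.sum_comm, sq, mul_assoc]
    congr 1
    rw [Finset.mul_sum]
    refine Finset.sum_congr rfl fun m _ => ?_
    have him : ((((A : ℂ) + l * m) * τ)).im ≠ 0 := by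
      have e : ((A : ℂ) + l * m) * τ = (((A : ℤ) + l * m : ℤ) : ℝ) * τ := by push_cast; ring
      rw [e, Complex.im_ofReal_mul]
      refine mul_ne_zero ?_ τ.im_ne_zero
      rw [Int.cast_ne_zero]
      intro h
      apply hnd
      exact ⟨-m, by linarith⟩
    rw [← cc_distrib hl him]
    refine Finset.sum_congr rfl fun j _ => ?_
    congr 1
    simp only [zz]
    field_simp
    push_cast
    ring

lemma sE_eq {l : ℕ} (hl : 0 < l) {a : ℤ} (ha : ¬ (l : ℤ) ∣ a) (τ : ℍ) :
    ∑ j ∈ Finset.range l, EE l a j τ = l ^ 2 * (-(2 * Real.pi * Complex.I)) * sE l a τ := by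
  have hl' : (0 : ℤ) < l := by exact_mod_cast hl
  have hlr : (l : ℝ) ≠ 0 := by exact_mod_cast hl.ne'
  have hu : a % l + l * (a / l) = a := Int.emod_add_mul_ediv a l
  have h0 := Int.emod_nonneg a hl'.ne'
  have h1 := Int.emod_lt_of_pos a hl'
  obtain ⟨A, hA⟩ := Int.eq_ofNat_of_zero_le h0
  have hA0 : 0 < A := by
    rcases Nat.eq_zero_or_pos A with h | h
    · exact absurd (Int.dvd_of_emod_eq_zero (by rw [hA, h]; rfl)) ha
    · exact h
  have hAl : A < l := by rw [hA] at h1; exact_mod_cast h1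
  rw [hA] at hu
  have hnd : ¬ ((l : ℤ) ∣ (A : ℤ)) := by
    rw [Int.natCast_dvd_natCast]
    exact Nat.not_dvd_of_pos_of_lt hA0 hAl
  have e1 : sE l a τ = sE l A τ := by
    have hc : (a : ZMod l) = ((A : ℤ) : ZMod l) := by
      rw [← hu]; simp
    have hf : Int.fract ((a : ℝ) / l) = Int.fract (((A : ℤ) : ℝ) / l) := by
      have : (a : ℝ) / l = ((A : ℤ) : ℝ) / l + (a / l : ℤ) := by
        conv_lhs => rw [← hu]
        rw [Int.cast_add, Int.cast_mul, add_div, Int.cast_natCast, Int.cast_natCast, mul_div_cancel_left₀ _ hlr]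
      rw [this, Int.fract_add_intCast]
    simp only [sE, hc, hf]
  rw [e1, ← sE_eq_of_lt hA0 hAl]
  refine Finset.sum_congr rfl fun j _ => ?_
  rw [← EE_add_u hl (fun h => hnd h.1) τ (a / l), hu]

lemma sum_shift {l : ℕ} (f : ℤ → ℂ) (hf : ∀ c, f (c + l) = f c) (c : ℤ) :
    ∑ j ∈ Finset.range l, f (c + j) = ∑ j ∈ Finset.range l, f j := by
  have step (c : ℤ) : ∑ j ∈ Finset.range l, f (c + 1 + j) = ∑ j ∈ Finset.range l, f (c + j) := by
    have h1 := Finset.sum_range_succ (fun j : ℕ => f (c + j)) l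
    have h2 := Finset.sum_range_succ' (fun j : ℕ => f (c + j)) l
    rw [h1, hf] at h2
    simp only [Nat.cast_zero, add_zero, Nat.cast_add, Nat.cast_one] at h2
    have h3 := add_right_cancel h2
    rw [h3]
    refine Finset.sum_congr rfl fun j _ => ?_
    congr 1
    ring
  induction c using Int.induction_on with
  | zero => simp
  | succ i ih => rw [step, ih]
  | pred i ih =>
    rw [← ih, ← step]
    simp

lemma nd_of_det {l : ℕ} {a : ℤ} (ha : ¬ (l : ℤ) ∣ a) {p q r t : ℤ} (hdet : p * t - q * r = 1) (j : ℤ) :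
    ¬ ((l : ℤ) ∣ a * p + j * r ∧ (l : ℤ) ∣ a * q + j * t) := by
  rintro ⟨h1, h2⟩
  apply ha
  have := dvd_sub (h1.mul_right t) (h2.mul_right r)
  have e : (a * p + j * r) * t - (a * q + j * t) * r = a := by
    linear_combination a * hdet
  rwa [e] at this

lemma sE_slash {l : ℕ} (hl : 0 < l) {a : ℤ} (ha : ¬ (l : ℤ) ∣ a) (γ : Matrix.SpecialLinearGroup (Fin 2) ℤ)
    (τ : ℍ) : l ^ 2 * (-(2 * Real.pi * Complex.I)) * SlashAction.map (1 : ℤ) γ (sE l a) τ =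
      ∑ j ∈ Finset.range l, EE l (a * γ 0 0 + j * γ 1 0) (a * γ 0 1 + j * γ 1 1) τ := by
  have hsl : SlashAction.map (1 : ℤ) γ (sE l a) τ = sE l a (γ • τ) * denom γ τ ^ (-1 : ℤ) :=
    ModularForm.SL_slash_apply (sE l a) γ τ
  have hden : denom γ τ = ((γ 1 0 : ℤ) : ℂ) * τ + ((γ 1 1 : ℤ) : ℂ) := by
    simp [denom]
  have hd := denom_ne_zero γ τ
  rw [hsl, ← mul_assoc, ← sE_eq hl ha, zpow_neg_one, ← div_eq_mul_inv, div_eq_iff hd,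
    Finset.sum_mul]
  rw [hden] at hd ⊢
  have hdet : γ 0 0 * γ 1 1 - γ 0 1 * γ 1 0 = 1 := by
    rw [← Matrix.det_fin_two, γ.det_coe]
  refine Finset.sum_congr rfl fun j _ => ?_
  have := EE_slash l a j τ (γ 0 0) (γ 0 1) (γ 1 0) (γ 1 1) hdet hd
  rw [mul_comm, ← this, UpperHalfPlane.coe_specialLinearGroup_apply]
  simp

lemma kap_ne {l : ℕ} (hl : 0 < l) : ((l : ℂ) ^ 2 * (-(2 * Real.pi * Complex.I))) ≠ 0 := by
  have hl' : (l : ℂ) ≠ 0 := by exact_mod_cast hl.ne'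
  exact mul_ne_zero (pow_ne_zero _ hl') (neg_ne_zero.mpr Complex.two_pi_I_ne_zero)

lemma sE_inv {l : ℕ} (hl : 0 < l) {a : ℤ} (ha : ¬ (l : ℤ) ∣ a) (γ : Matrix.SpecialLinearGroup (Fin 2) ℤ)
    (hγ : γ ∈ CongruenceSubgroup.Gamma1 l) :
    SlashAction.map (1 : ℤ) γ (sE l a) = sE l a := by
  ext τ
  apply mul_left_cancel₀ (kap_ne hl)
  rw [sE_slash hl ha, ← sE_eq hl ha]
  obtain ⟨h1, h2, h3⟩ := (CongruenceSubgroup.Gamma1_mem l γ).mp hγ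
  have k1 : (l : ℤ) ∣ γ 0 0 - 1 := by
    rw [← ZMod.intCast_zmod_eq_zero_iff_dvd]; push_cast; rw [h1, sub_self]
  have k2 : (l : ℤ) ∣ γ 1 1 - 1 := by
    rw [← ZMod.intCast_zmod_eq_zero_iff_dvd]; push_cast; rw [h2, sub_self]
  have k3 : (l : ℤ) ∣ γ 1 0 := by
    rw [← ZMod.intCast_zmod_eq_zero_iff_dvd, h3]
  obtain ⟨x, hx⟩ := k1
  obtain ⟨y, hy⟩ := k2
  obtain ⟨z, hz⟩ := k3
  have hn (w : ℤ) : ¬ ((l : ℤ) ∣ a ∧ (l : ℤ) ∣ w) := fun h => ha h.1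
  rw [← sum_shift (fun w => EE l a w τ) (fun w => by
    simpa using EE_add_w hl (hn w) τ 1) (a * γ 0 1)]
  refine Finset.sum_congr rfl fun j _ => ?_
  have e1 : a * γ 0 0 + j * γ 1 0 = a + l * (a * x + j * z) := by
    linear_combination a * hx + j * hz
  have e2 : a * γ 0 1 + j * γ 1 1 = (a * γ 0 1 + j) + l * (j * y) := by
    linear_combination j * hy
  rw [e1, e2, EE_add_u hl, EE_add_w hl (hn _)]
  exact hn _

lemma sE_bdd {l : ℕ} (hl : 0 < l) {a : ℤ} (ha : ¬ (l : ℤ) ∣ a) (γ : Matrix.SpecialLinearGroup (Fin 2) ℤ) :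
    IsBoundedAtImInfty (SlashAction.map (1 : ℤ) γ (sE l a)) := by
  have hdet : γ 0 0 * γ 1 1 - γ 0 1 * γ 1 0 = 1 := by
    rw [← Matrix.det_fin_two, γ.det_coe]
  choose K hK using fun j : ℕ => EE_bdd hl (nd_of_det ha hdet j)
  rw [UpperHalfPlane.isBoundedAtImInfty_iff]
  refine ⟨‖((l : ℂ) ^ 2 * (-(2 * Real.pi * Complex.I)))‖⁻¹ * ∑ j ∈ Finset.range l, K j, 1, fun τ hτ => ?_⟩
  have h := sE_slash hl ha γ τ
  rw [← eq_inv_mul_iff_mul_eq₀ (kap_ne hl)] at h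
  rw [h, norm_mul, norm_inv]
  gcongr
  exact (norm_sum_le _ _).trans (Finset.sum_le_sum fun j _ => hK j τ hτ)

lemma sE_holo {l : ℕ} {a : ℤ} (ha : ¬ (a : ZMod l) = 0) :
    DifferentiableOn ℂ (sE l a ∘ ofComplex) {z | 0 < z.im} := by
  intro z hz
  have hz' : 0 < z.im := hz
  set y := z.im / 2 with hy
  have hy0 : 0 < y := by positivity
  set ρ := Real.exp (-(2 * Real.pi * y)) with hρ
  have hρ1 : ‖ρ‖ < 1 := by
    rw [Real.norm_of_nonneg (Real.exp_pos _).le, Real.exp_lt_one_iff]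
    have : 0 < 2 * Real.pi * y := by positivity
    linarith
  have hU : IsOpen {w : ℂ | y < w.im} := isOpen_lt continuous_const Complex.continuous_im
  have hd : DifferentiableOn ℂ (fun w : ℂ => ∑' n : ℕ,
      cexp (2 * Real.pi * Complex.I * (n : ℂ) * w) * ∑ d ∈ n.divisors, ch l a d) {w : ℂ | y < w.im} := by
    refine Complex.differentiableOn_tsum_of_summable_norm
      (summable_pow_mul_geometric_of_norm_lt_one 1 hρ1) (fun n => ?_) hU fun n w hw => ?_
    · fun_prop
    · have e : (2 * Real.pi * Complex.I * (n : ℂ) * w) = 2 * Real.pi * Complex.I * (n * w) := by ring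
      rw [norm_mul, e, norm_exp_2pi, mul_comm, pow_one]
      have hw' : y < w.im := hw
      have hb : ‖∑ d ∈ n.divisors, ch l a d‖ ≤ n := by
        refine (norm_sum_le _ _).trans ((Finset.sum_le_sum fun d _ => ch_norm l a d).trans ?_)
        simpa using Nat.card_divisors_le_self n
      have hc : Real.exp (-(2 * Real.pi * (n * w : ℂ).im)) ≤ ρ ^ n := by
        rw [hρ, ← Real.exp_nat_mul, Real.exp_le_exp]
        have : (n * w : ℂ).im = n * w.im := by simp
        rw [this]
        have : (n : ℝ) * y ≤ n * w.im := by gcongr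
        nlinarith [Real.pi_pos]
      gcongr
  have hzU : {w : ℂ | y < w.im} ∈ 𝓝 z := hU.mem_nhds (by
    show y < z.im
    rw [hy]; linarith)
  have hdz := (hd.differentiableAt hzU).const_add
    ((((1 : ℝ) / 2 - Int.fract ((a : ℝ) / (l : ℝ)) : ℝ) : ℂ))
  refine (hdz.congr_of_eventuallyEq ?_).differentiableWithinAt
  filter_upwards [hzU] with w hw
  have hw0 : 0 < w.im := hy0.trans hw
  simp only [Function.comp_apply, sE, if_neg ha, ch, ofComplex_apply_of_im_pos hw0]

theorem stmt11 (l : ℕ) (hl : 1 < l) (a : ℤ) (ha : (a : ZMod l) ≠ 0) :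
    ∃ F : ModularForm (CongruenceSubgroup.Gamma1 l) 1, ∀ τ : ℍ, F τ = sE l a τ := by
  have hl0 : 0 < l := by omega
  have : NeZero l := ⟨hl0.ne'⟩
  have hnd : ¬ (l : ℤ) ∣ a := by
    rwa [← ZMod.intCast_zmod_eq_zero_iff_dvd]
  refine ⟨{ toFun := sE l a
            slash_action_eq' := ?_
            holo' := ?_
            bdd_at_cusps' := ?_ }, fun τ => rfl⟩
  · rintro _ ⟨γ, hγ, rfl⟩
    exact sE_inv hl0 hnd γ hγ
  · exact UpperHalfPlane.mdifferentiable_iff.mpr (sE_holo ha)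
  · intro c hc
    rw [Subgroup.IsArithmetic.isCusp_iff_isCusp_SL2Z] at hc
    rw [OnePoint.isBoundedAt_iff_forall_SL2Z hc]
    exact fun γ _ => sE_bdd hl0 hnd γ
end

section
/- With the notation of the context, for every λ ∈ SL₂(ℤ) and every τ ∈ ℍ one has the transformation formulas G_{0,λσ}(τ) = G_{2,λ}(σ·τ), G_{1,λσ}(τ) = −G_{1,λ}(σ·τ) − 2·G_{2,λ}(σ·τ), G_{2,λσ}(τ) = G_{0,λ}(σ·τ) + 4·G_{1,λ}(σ·τ) + 4·G_{2,λ}(σ·τ), and consequently the pointwise identity G_{0,λσ}(τ)·f_{2,λσ}(τ) − 2·G_{1,λσ}(τ)·f_{1,λσ}(τ) + G_{2,λσ}(τ)·f_{0,λσ}(τ) = ( G_{0,λ}(σ·τ)·f_{2,λ}(σ·τ) − 2·G_{1,λ}(σ·τ)·f_{1,λ}(σ·τ) + G_{2,λ}(σ·τ)·f_{0,λ}(σ·τ) )·(τ+2)^{−2}. -/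
open scoped BigOperators MatrixGroups
open UpperHalfPlane

namespace MW

/-- Möbius action of an integral matrix on `ℂ` (junk where the denominator vanishes). -/
noncomputable def mob (γ : SL(2, ℤ)) (z : ℂ) : ℂ :=
  (((γ : Matrix (Fin 2) (Fin 2) ℤ) 0 0 : ℂ) * z + ((γ : Matrix (Fin 2) (Fin 2) ℤ) 0 1 : ℂ)) /
    (((γ : Matrix (Fin 2) (Fin 2) ℤ) 1 0 : ℂ) * z + ((γ : Matrix (Fin 2) (Fin 2) ℤ) 1 1 : ℂ))

/-- Extension by zero of a function on `ℍ` to `ℂ`. -/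
noncomputable def extH (f : ℍ → ℂ) : ℂ → ℂ :=
  fun z => if h : 0 < z.im then f ⟨z, h⟩ else 0

/-- The straight path from `−1` to `τ`, evaluated at `x ∈ [0,1]`. -/
noncomputable def pathPt (τ : ℍ) (x : ℝ) : ℂ := -1 + (x : ℂ) * ((τ : ℂ) + 1)

/-- `f_{i,λ}(τ) = f(λ·τ)·(cτ+d)^{−4}·τ^i`. -/
noncomputable def fia (f : ℍ → ℂ) (γ : SL(2, ℤ)) (i : ℕ) (τ : ℍ) : ℂ :=
  f (γ • τ) *
      (((γ : Matrix (Fin 2) (Fin 2) ℤ) 1 0 : ℂ) * (τ : ℂ) +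
        ((γ : Matrix (Fin 2) (Fin 2) ℤ) 1 1 : ℂ)) ^ (-4 : ℤ) *
    (τ : ℂ) ^ i

/-- `G_{i,λ}(τ) = conj( ∫_{−1}^{τ} g(λ·s)·(cs+d)^{−4}·s^i ds )`, the (path-independent)
integral computed along the straight segment from `−1` to `τ`. -/
noncomputable def G (g : ℍ → ℂ) (γ : SL(2, ℤ)) (i : ℕ) (τ : ℍ) : ℂ :=
  (starRingEnd ℂ)
    (∫ x in (0 : ℝ)..1,
      extH g (mob γ (pathPt τ x)) *
          (((γ : Matrix (Fin 2) (Fin 2) ℤ) 1 0 : ℂ) * pathPt τ x +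
            ((γ : Matrix (Fin 2) (Fin 2) ℤ) 1 1 : ℂ)) ^ (-4 : ℤ) *
        (pathPt τ x) ^ i * ((τ : ℂ) + 1))

/-- The matrix `σ = (0 −1; 1 2)`, so that `σ·τ = −1/(τ+2)`. -/
noncomputable def sig : SL(2, ℤ) :=
  ⟨!![0, -1; 1, 2], by norm_num [Matrix.det_fin_two_of]⟩

end MW

namespace MW
open Set Filter Topology MeasureTheory

/-- Boundedness of `φ` in cones with apex `-1`. -/
def ConeBdd (φ : ℂ → ℂ) : Prop :=
  ∀ δ : ℝ, 0 < δ → ∃ r : ℝ, 0 < r ∧ ∃ C : ℝ, ∀ s : ℂ, 0 < s.im → δ * ‖s + 1‖ ≤ s.im →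
    ‖s + 1‖ < r → ‖φ s‖ ≤ C

/-- Admissible paths from `-1` into the upper half-plane. -/
structure Adm (γ γ' : ℝ → ℂ) : Prop where
  der : ∀ x ∈ Icc (0 : ℝ) 1, HasDerivAt γ (γ' x) x
  cont : ContinuousOn γ' (Icc 0 1)
  zero : γ 0 = -1
  pos : ∀ x ∈ Ioc (0 : ℝ) 1, 0 < (γ x).im
  cone : ∃ δ : ℝ, 0 < δ ∧ ∀ x ∈ Ioc (0 : ℝ) 1, δ * ‖γ x + 1‖ ≤ (γ x).im

lemma Adm.contγ {γ γ' : ℝ → ℂ} (h : Adm γ γ') : ContinuousOn γ (Icc 0 1) :=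
  fun x hx => (h.der x hx).continuousAt.continuousWithinAt

lemma Adm.contφ {γ γ' : ℝ → ℂ} (h : Adm γ γ') {φ : ℂ → ℂ}
    (hφ : DifferentiableOn ℂ φ {z | 0 < z.im}) :
    ContinuousOn (fun x => φ (γ x) * γ' x) (Ioc 0 1) :=
  (hφ.continuousOn.comp (h.contγ.mono Ioc_subset_Icc_self) (fun x hx => h.pos x hx)).mul
    (h.cont.mono Ioc_subset_Icc_self)

lemma Adm.near {γ γ' : ℝ → ℂ} (h : Adm γ γ') {r : ℝ} (hr : 0 < r) :
    ∃ ε : ℝ, 0 < ε ∧ ε ≤ 1 ∧ ∀ x ∈ Ioc (0 : ℝ) ε, ‖γ x + 1‖ < r := by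
  have h0 := (h.der 0 (by simp)).continuousAt
  rw [Metric.continuousAt_iff] at h0
  obtain ⟨e, he, H⟩ := h0 r hr
  refine ⟨min (e / 2) 1, by positivity, min_le_right _ _, fun x hx => ?_⟩
  have : x ≤ e / 2 := hx.2.trans (min_le_left _ _)
  have := H (x := x) (by rw [Real.dist_eq, sub_zero, abs_of_pos hx.1]; linarith)
  rwa [h.zero, dist_eq_norm, sub_neg_eq_add] at this

lemma Adm.integrable {γ γ' : ℝ → ℂ} (h : Adm γ γ') {φ : ℂ → ℂ}
    (hφ : DifferentiableOn ℂ φ {z | 0 < z.im}) (hb : ConeBdd φ) :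
    IntervalIntegrable (fun x => φ (γ x) * γ' x) volume 0 1 := by
  obtain ⟨δ, hδ, hc⟩ := h.cone
  obtain ⟨r, hr, C, hC⟩ := hb δ hδ
  obtain ⟨ε, hε, hε1, hn⟩ := h.near hr
  obtain ⟨B, hB⟩ := isCompact_Icc.exists_bound_of_continuousOn h.cont
  have hcφ := h.contφ hφ
  have i1 : IntervalIntegrable (fun x => φ (γ x) * γ' x) volume 0 ε := by
    rw [intervalIntegrable_iff_integrableOn_Ioc_of_le hε.le]
    refine Integrable.mono' (g := fun _ => C * B)
      (integrableOn_const (by simp)) ?_ ?_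
    · exact (hcφ.mono (Ioc_subset_Ioc_right hε1)).aestronglyMeasurable measurableSet_Ioc
    · refine (ae_restrict_iff' measurableSet_Ioc).2 (Eventually.of_forall fun x hx => ?_)
      have hx1 : x ∈ Ioc (0 : ℝ) 1 := ⟨hx.1, hx.2.trans hε1⟩
      have a1 := hC (γ x) (h.pos x hx1) (hc x hx1) (hn x hx)
      have a2 := hB x (Ioc_subset_Icc_self hx1)
      rw [norm_mul]
      exact mul_le_mul a1 a2 (norm_nonneg _) ((norm_nonneg _).trans a1)
  refine i1.trans ?_
  refine ContinuousOn.intervalIntegrable ?_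
  rw [uIcc_of_le hε1]
  exact hcφ.mono fun x hx => ⟨hε.trans_le hx.1, hx.2⟩

lemma convex_cone (δ r : ℝ) (hδ : 0 < δ) :
    Convex ℝ {s : ℂ | 0 < s.im ∧ δ * ‖s + 1‖ ≤ s.im ∧ ‖s + 1‖ < r} := by
  intro x hx y hy a b ha hb hab
  obtain ⟨x1, x2, x3⟩ := hx
  obtain ⟨y1, y2, y3⟩ := hy
  have e : a • x + b • y + 1 = a • (x + 1) + b • (y + 1) := by
    have : (a : ℂ) + b = 1 := by exact_mod_cast hab
    simp only [Complex.real_smul]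
    linear_combination -this
  have n : ‖a • x + b • y + 1‖ ≤ a * ‖x + 1‖ + b * ‖y + 1‖ := by
    rw [e]
    refine (norm_add_le _ _).trans_eq ?_
    rw [norm_smul, norm_smul, Real.norm_of_nonneg ha, Real.norm_of_nonneg hb]
  have im : (a • x + b • y).im = a * x.im + b * y.im := by simp
  have key : 0 < a ∨ 0 < b := by
    by_contra hcon
    push Not at hcon
    linarith
  refine ⟨?_, ?_, ?_⟩
  · rw [im]
    rcases key with k | k
    · have := mul_pos k x1
      have := mul_nonneg hb y1.le
      linarith
    · have := mul_pos k y1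
      have := mul_nonneg ha x1.le
      linarith
  · rw [im]
    have := mul_le_mul_of_nonneg_left n hδ.le
    have := mul_le_mul_of_nonneg_left x2 ha
    have := mul_le_mul_of_nonneg_left y2 hb
    nlinarith
  · refine n.trans_lt ?_
    have hb' : a * r + b * r = r := by rw [← add_mul, hab, one_mul]
    rcases key with k | k
    · have := mul_lt_mul_of_pos_left x3 k
      have := mul_le_mul_of_nonneg_left y3.le hb
      linarith
    · have := mul_lt_mul_of_pos_left y3 k
      have := mul_le_mul_of_nonneg_left x3.le ha
      linarith

lemma horo_mem {δ M : ℝ} (hδ : 0 < δ) (hM : 0 < M) {s : ℂ} (h0 : 0 < s.im)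
    (h1 : δ * ‖s + 1‖ ≤ s.im) (h2 : ‖s + 1‖ ≤ M) :
    s ∈ Metric.ball (-1 + (M / δ : ℝ) * Complex.I) (M / δ) := by
  have hR : 0 < M / δ := div_pos hM hδ
  have hRd : M / δ * δ = M := by field_simp
  set R := M / δ with hRdef
  have hs : ‖s + 1‖ ^ 2 = (s.re + 1) ^ 2 + s.im ^ 2 := by
    rw [Complex.sq_norm, Complex.normSq_apply]
    simp
    ring
  rw [Metric.mem_ball, dist_eq_norm]
  have hd : ‖s - (-1 + (R : ℝ) * Complex.I)‖ ^ 2 = (s.re + 1) ^ 2 + (s.im - R) ^ 2 := by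
    rw [Complex.sq_norm, Complex.normSq_apply]
    simp
    ring
  refine lt_of_pow_lt_pow_left₀ 2 hR.le ?_
  rw [hd]
  have a1 : ‖s + 1‖ ^ 2 ≤ R * s.im := by
    have := mul_le_mul_of_nonneg_left h2 (norm_nonneg (s + 1))
    have := mul_le_mul_of_nonneg_left h1 hR.le
    nlinarith
  nlinarith [mul_pos hR h0]

lemma horo_sub (R : ℝ) : Metric.ball (-1 + (R : ℝ) * Complex.I) R ⊆ {z : ℂ | 0 < z.im} := by
  intro s hs
  rw [Metric.mem_ball, dist_eq_norm] at hs
  have := (Complex.abs_im_le_norm (s - (-1 + (R : ℝ) * Complex.I))).trans_lt hs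
  rw [abs_lt] at this
  simp at this
  exact this.1

lemma path_indep {φ : ℂ → ℂ} (hφ : DifferentiableOn ℂ φ {z | 0 < z.im}) (hb : ConeBdd φ)
    {γ₁ γ₁' γ₂ γ₂' : ℝ → ℂ} (h₁ : Adm γ₁ γ₁') (h₂ : Adm γ₂ γ₂') (hend : γ₁ 1 = γ₂ 1) :
    ∫ x in (0 : ℝ)..1, φ (γ₁ x) * γ₁' x = ∫ x in (0 : ℝ)..1, φ (γ₂ x) * γ₂' x := by
  obtain ⟨δ₁, hδ₁, hc₁⟩ := h₁.cone
  obtain ⟨δ₂, hδ₂, hc₂⟩ := h₂.cone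
  obtain ⟨M₁, hM₁⟩ := isCompact_Icc.exists_bound_of_continuousOn (h₁.contγ.add continuousOn_const)
  obtain ⟨M₂, hM₂⟩ := isCompact_Icc.exists_bound_of_continuousOn (h₂.contγ.add continuousOn_const)
  set δ := min δ₁ δ₂
  have hδ : 0 < δ := lt_min hδ₁ hδ₂
  obtain ⟨r, hr, C, hC⟩ := hb δ hδ
  set M := max (max M₁ M₂) r
  have hM : 0 < M := hr.trans_le (le_max_right _ _)
  set D := Metric.ball (-1 + (M / δ : ℝ) * Complex.I) (M / δ)
  obtain ⟨P, hP⟩ := (hφ.mono (horo_sub (M / δ))).isExactOn_ball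
  have cone₁ : ∀ x ∈ Ioc (0 : ℝ) 1, δ * ‖γ₁ x + 1‖ ≤ (γ₁ x).im := fun x hx =>
    (mul_le_mul_of_nonneg_right (min_le_left _ _) (norm_nonneg _)).trans (hc₁ x hx)
  have cone₂ : ∀ x ∈ Ioc (0 : ℝ) 1, δ * ‖γ₂ x + 1‖ ≤ (γ₂ x).im := fun x hx =>
    (mul_le_mul_of_nonneg_right (min_le_right _ _) (norm_nonneg _)).trans (hc₂ x hx)
  have mem₁ : ∀ x ∈ Ioc (0 : ℝ) 1, γ₁ x ∈ D := fun x hx =>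
    horo_mem hδ hM (h₁.pos x hx) (cone₁ x hx)
      ((hM₁ x (Ioc_subset_Icc_self hx)).trans ((le_max_left _ _).trans (le_max_left _ _)))
  have mem₂ : ∀ x ∈ Ioc (0 : ℝ) 1, γ₂ x ∈ D := fun x hx =>
    horo_mem hδ hM (h₂.pos x hx) (cone₂ x hx)
      ((hM₂ x (Ioc_subset_Icc_self hx)).trans ((le_max_right _ _).trans (le_max_left _ _)))
  have ftc : ∀ {γ γ' : ℝ → ℂ}, Adm γ γ' → (∀ x ∈ Ioc (0 : ℝ) 1, γ x ∈ D) → ∀ ε ∈ Ioc (0 : ℝ) 1,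
      ∫ x in ε..1, φ (γ x) * γ' x = P (γ 1) - P (γ ε) := by
    intro γ γ' h mem ε hε
    refine intervalIntegral.integral_eq_sub_of_hasDerivAt (f := fun x => P (γ x)) ?_ ?_
    · intro x hx
      rw [uIcc_of_le hε.2] at hx
      have hx' : x ∈ Ioc (0 : ℝ) 1 := ⟨hε.1.trans_le hx.1, hx.2⟩
      exact (hP _ (mem x hx')).comp x (h.der x (Ioc_subset_Icc_self hx'))
    · refine ContinuousOn.intervalIntegrable ?_
      rw [uIcc_of_le hε.2]
      exact (h.contφ hφ).mono fun x hx => ⟨hε.1.trans_le hx.1, hx.2⟩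
  have lim : ∀ {γ γ' : ℝ → ℂ}, Adm γ γ' →
      Tendsto (fun ε : ℝ => ∫ x in ε..1, φ (γ x) * γ' x) (𝓝[>] 0)
        (𝓝 (∫ x in (0 : ℝ)..1, φ (γ x) * γ' x)) := by
    intro γ γ' h
    have hi := (intervalIntegrable_iff_integrableOn_Icc_of_le zero_le_one).1 (h.integrable hφ hb)
    rw [← uIcc_of_le (zero_le_one (α := ℝ))] at hi
    have := intervalIntegral.continuousOn_primitive_interval_left hi 0 (by simp)
    rw [uIcc_of_le (zero_le_one (α := ℝ))] at this
    refine Tendsto.mono_left this ?_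
    rw [← nhdsWithin_Ioc_eq_nhdsGT (zero_lt_one (α := ℝ))]
    exact nhdsWithin_mono _ Ioc_subset_Icc_self
  have l := (lim h₁).sub (lim h₂)
  obtain ⟨ε₁, e1, e1', n1⟩ := h₁.near hr
  obtain ⟨ε₂, e2, e2', n2⟩ := h₂.near hr
  have l0 : Tendsto (fun ε : ℝ => (∫ x in ε..1, φ (γ₁ x) * γ₁' x) - ∫ x in ε..1, φ (γ₂ x) * γ₂' x)
      (𝓝[>] 0) (𝓝 0) := by
    have hz : Tendsto (fun ε : ℝ => C * ‖γ₁ ε - γ₂ ε‖) (𝓝[>] 0) (𝓝 0) := by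
      have a1 := (h₁.der 0 (by simp)).continuousAt.tendsto
      have a2 := (h₂.der 0 (by simp)).continuousAt.tendsto
      have := ((a1.sub a2).norm.const_mul C).mono_left (nhdsWithin_le_nhds (s := Ioi 0))
      simpa [h₁.zero, h₂.zero] using this
    refine squeeze_zero_norm' ?_ hz
    have : Ioc (0 : ℝ) (min ε₁ ε₂) ∈ 𝓝[>] (0 : ℝ) := Ioc_mem_nhdsGT (lt_min e1 e2)
    filter_upwards [this] with ε hε
    have hε1 : ε ∈ Ioc (0 : ℝ) 1 := ⟨hε.1, hε.2.trans ((min_le_left _ _).trans e1')⟩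
    rw [ftc h₁ mem₁ ε hε1, ftc h₂ mem₂ ε hε1, hend]
    have : P (γ₂ 1) - P (γ₁ ε) - (P (γ₂ 1) - P (γ₂ ε)) = -(P (γ₁ ε) - P (γ₂ ε)) := by ring
    rw [this, norm_neg]
    refine (convex_cone δ r hδ).norm_image_sub_le_of_norm_hasDerivWithin_le (f := P) (f' := φ)
      (C := C) ?_ ?_ ?_ ?_
    · intro s hs
      exact (hP s (horo_mem hδ hM hs.1 hs.2.1 (hs.2.2.le.trans (le_max_right _ _)))).hasDerivWithinAt
    · intro s hs
      exact hC s hs.1 hs.2.1 hs.2.2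
    · exact ⟨h₂.pos ε hε1, cone₂ ε hε1, n2 ε ⟨hε.1, hε.2.trans (min_le_right _ _)⟩⟩
    · exact ⟨h₁.pos ε hε1, cone₁ ε hε1, n1 ε ⟨hε.1, hε.2.trans (min_le_left _ _)⟩⟩
  exact sub_eq_zero.1 (tendsto_nhds_unique l l0)
end MW

namespace MW
open Set Filter Topology MeasureTheory ModularForm

/-- The slashed form, extended to `ℂ`. -/
noncomputable def Hh (g : ℍ → ℂ) (γ : SL(2, ℤ)) (z : ℂ) : ℂ :=
  extH g (mob γ z) *
          (((γ : Matrix (Fin 2) (Fin 2) ℤ) 1 0 : ℂ) * z +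
            ((γ : Matrix (Fin 2) (Fin 2) ℤ) 1 1 : ℂ)) ^ (-4 : ℤ)

lemma coe_smul_eq_mob (γ : SL(2, ℤ)) (τ : ℍ) : ((γ • τ : ℍ) : ℂ) = mob γ τ := by
  rw [UpperHalfPlane.coe_specialLinearGroup_apply]
  simp [mob]

lemma slash_eq (g : ℍ → ℂ) (γ : SL(2, ℤ)) (τ : ℍ) :
    (g ∣[(4 : ℤ)] γ) τ = g (γ • τ) * (((γ : Matrix (Fin 2) (Fin 2) ℤ) 1 0 : ℂ) * (τ : ℂ) +
        ((γ : Matrix (Fin 2) (Fin 2) ℤ) 1 1 : ℂ)) ^ (-4 : ℤ) := by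
  rw [ModularForm.SL_slash_apply, ModularGroup.denom_apply]

lemma Hh_eq (g : ℍ → ℂ) (γ : SL(2, ℤ)) (τ : ℍ) : Hh g γ τ = (g ∣[(4 : ℤ)] γ) τ := by
  have h : extH g ((γ • τ : ℍ) : ℂ) = g (γ • τ) := dif_pos (γ • τ).im_pos
  rw [slash_eq, Hh, ← coe_smul_eq_mob, h]

lemma Hh_mul (g : ℍ → ℂ) (γ μ : SL(2, ℤ)) (τ : ℍ) :
    Hh g (γ * μ) τ = Hh g γ (μ • τ : ℍ) * (((μ : Matrix (Fin 2) (Fin 2) ℤ) 1 0 : ℂ) * (τ : ℂ) +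
        ((μ : Matrix (Fin 2) (Fin 2) ℤ) 1 1 : ℂ)) ^ (-4 : ℤ) := by
  rw [Hh_eq, SlashAction.slash_mul, slash_eq, Hh_eq]

lemma coe_sig (τ : ℍ) : ((sig • τ : ℍ) : ℂ) = -1 / ((τ : ℂ) + 2) := by
  rw [coe_smul_eq_mob]
  simp [mob, sig]

lemma Hh_sig (g : ℍ → ℂ) (γ : SL(2, ℤ)) (τ : ℍ) :
    Hh g (γ * sig) τ = Hh g γ (-1 / ((τ : ℂ) + 2)) * ((τ : ℂ) + 2) ^ (-4 : ℤ) := by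
  rw [Hh_mul, coe_sig]
  simp [sig]

/-- `s ↦ -1/(s+1)`, sending the cusp `-1` to `∞`. -/
noncomputable def nu : SL(2, ℤ) :=
  ⟨!![0, -1; 1, 1], by norm_num [Matrix.det_fin_two_of]⟩

lemma Hh_nu (g : ℍ → ℂ) (γ : SL(2, ℤ)) (τ : ℍ) :
    Hh g γ τ = (g ∣[(4 : ℤ)] (γ * nu⁻¹)) (nu • τ) * ((τ : ℂ) + 1) ^ (-4 : ℤ) := by
  have := Hh_mul g (γ * nu⁻¹) nu τ
  rw [inv_mul_cancel_right] at this
  rw [this, Hh_eq]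
  simp [nu]

lemma im_nu (τ : ℍ) : (nu • τ : ℍ).im = τ.im / ‖(τ : ℂ) + 1‖ ^ 2 := by
  rw [← UpperHalfPlane.coe_im, coe_smul_eq_mob]
  have : mob nu τ = -((τ : ℂ) + 1)⁻¹ := by simp [mob, nu, neg_div]
  rw [this, Complex.sq_norm]
  simp [Complex.inv_im, neg_div]

lemma Hh_diff (l : ℕ) (g : CuspForm (CongruenceSubgroup.Gamma1 l) 4) (γ : SL(2, ℤ)) :
    DifferentiableOn ℂ (Hh g γ) {z | 0 < z.im} := by
  have h := UpperHalfPlane.mdifferentiable_iff.1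
    ((ModularFormClass.holo g).slash 4 (γ : GL (Fin 2) ℝ))
  refine h.congr fun z hz => ?_
  rw [Function.comp_apply, ofComplex_apply_of_im_pos hz]
  exact Hh_eq g γ ⟨z, hz⟩

open ConjAct Pointwise in
lemma slash_decay (l : ℕ) (hl : 3 ≤ l) (g : CuspForm (CongruenceSubgroup.Gamma1 l) 4)
    (γ : SL(2, ℤ)) : ∃ A C : ℝ, ∀ τ : ℍ, A ≤ τ.im → ‖((g : ℍ → ℂ) ∣[(4 : ℤ)] γ) τ‖ ≤ C * (τ.im ^ 4)⁻¹ := by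
  have : NeZero l := ⟨by omega⟩
  have : ((toConjAct (γ : GL (Fin 2) ℝ)⁻¹) •
      ((CongruenceSubgroup.Gamma1 l : Subgroup SL(2, ℤ)) : Subgroup (GL (Fin 2) ℝ))).IsArithmetic := by
    simpa [(show Rat.castHom ℝ = algebraMap ℚ ℝ by rfl), map_inv, Matrix.SpecialLinearGroup.map_mapGL]
      using! Subgroup.IsArithmetic.conj _ (Matrix.SpecialLinearGroup.mapGL ℚ γ)⁻¹
  obtain ⟨c, hc, h⟩ := CuspFormClass.exp_decay_atImInfty' (CuspForm.translate g (γ : GL (Fin 2) ℝ))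
  have h2 : (fun τ : ℍ => Real.exp (-c * τ.im)) =O[atImInfty] fun τ : ℍ => τ.im ^ (-4 : ℝ) :=
    (isLittleO_exp_neg_mul_rpow_atTop hc (-4)).isBigO.comp_tendsto tendsto_comap
  obtain ⟨C, hC⟩ := (h.trans h2).bound
  obtain ⟨A, hA⟩ := (UpperHalfPlane.atImInfty_mem _).1 hC
  refine ⟨A, C, fun τ hτ => ?_⟩
  have := hA τ hτ
  simp only [mem_ofPred_eq] at this
  rw [Real.norm_of_nonneg (by have := τ.im_pos; positivity),
    Real.rpow_neg τ.im_pos.le] at this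
  norm_num at this
  exact_mod_cast this

lemma Hh_bdd (l : ℕ) (hl : 3 ≤ l) (g : CuspForm (CongruenceSubgroup.Gamma1 l) 4) (γ : SL(2, ℤ)) :
    ConeBdd (Hh g γ) := by
  intro δ hδ
  obtain ⟨A, C, h⟩ := slash_decay l hl g (γ * nu⁻¹)
  refine ⟨δ / (|A| + 1), by positivity, |C| * (δ ^ 4)⁻¹, fun s hs hcone hr => ?_⟩
  have e := Hh_nu g γ ⟨s, hs⟩
  have n0 : 0 < ‖s + 1‖ := by
    refine norm_pos_iff.2 fun h0 => ?_
    have := congrArg Complex.im h0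
    simp at this
    exact hs.ne' this
  have i := im_nu ⟨s, hs⟩
  change _ = s.im / ‖s + 1‖ ^ 2 at i
  change Hh g γ s = _ * (s + 1) ^ (-4 : ℤ) at e
  have b := h (nu • ⟨s, hs⟩) (by
    rw [i, le_div_iff₀ (by positivity)]
    rw [lt_div_iff₀ (by positivity)] at hr
    have h1 : A ≤ |A| := le_abs_self A
    have : A * ‖s + 1‖ ^ 2 ≤ |A| * ‖s + 1‖ ^ 2 := by gcongr
    nlinarith)
  rw [i] at b
  rw [e, norm_mul, norm_zpow]
  have z : ‖s + 1‖ ^ (-4 : ℤ) = (‖s + 1‖ ^ 4)⁻¹ := by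
    rw [zpow_neg]; rfl
  rw [z]
  have b' := mul_le_mul_of_nonneg_right b (by positivity : (0 : ℝ) ≤ (‖s + 1‖ ^ 4)⁻¹)
  refine b'.trans ?_
  have e2 : C * ((s.im / ‖s + 1‖ ^ 2) ^ 4)⁻¹ * (‖s + 1‖ ^ 4)⁻¹ = C * ((s.im / ‖s + 1‖) ^ 4)⁻¹ := by
    field_simp
  rw [e2]
  have : δ ≤ s.im / ‖s + 1‖ := (le_div_iff₀ n0).2 hcone
  gcongr
  exact le_abs_self C

lemma ConeBdd.mul_pow {φ : ℂ → ℂ} (h : ConeBdd φ) (i : ℕ) : ConeBdd (fun s => φ s * s ^ i) := by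
  intro δ hδ
  obtain ⟨r, hr, C, hC⟩ := h δ hδ
  refine ⟨r, hr, C * (r + 1) ^ i, fun s h1 h2 h3 => ?_⟩
  have a := hC s h1 h2 h3
  have b : ‖s‖ ≤ r + 1 := by
    have := norm_sub_le (s + 1) 1
    simp at this
    linarith
  rw [norm_mul, norm_pow]
  exact mul_le_mul a (by gcongr) (by positivity) ((norm_nonneg _).trans a)

lemma im_pathPt (τ : ℍ) (x : ℝ) : (pathPt τ x).im = x * τ.im := by
  simp [pathPt]

lemma pathPt_add_one (τ : ℍ) (x : ℝ) : pathPt τ x + 1 = x * ((τ : ℂ) + 1) := by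
  simp [pathPt]

lemma tau_add_one_norm (τ : ℍ) : 0 < ‖(τ : ℂ) + 1‖ := by
  refine norm_pos_iff.2 fun h0 => ?_
  have := congrArg Complex.im h0
  simp at this
  exact τ.im_ne_zero this

lemma adm_seg (τ : ℍ) : Adm (pathPt τ) (fun _ => (τ : ℂ) + 1) where
  der x _ := by
    have := ((Complex.ofRealCLM.hasDerivAt (x := x)).mul_const ((τ : ℂ) + 1)).const_add (-1)
    rw [Complex.ofRealCLM_apply, Complex.ofReal_one, one_mul] at this
    exact this
  cont := continuousOn_const
  zero := by simp [pathPt]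
  pos x hx := by rw [im_pathPt]; exact mul_pos hx.1 τ.im_pos
  cone := by
    have := tau_add_one_norm τ
    refine ⟨τ.im / ‖(τ : ℂ) + 1‖, div_pos τ.im_pos this, fun x hx => le_of_eq ?_⟩
    rw [pathPt_add_one, im_pathPt, norm_mul, Complex.norm_real, Real.norm_of_nonneg hx.1.le]
    field_simp

lemma path_ne (τ : ℍ) {x : ℝ} (hx : 0 ≤ x) : pathPt τ x + 2 ≠ 0 := by
  intro h
  have h1 := congrArg Complex.im h
  have h2 := congrArg Complex.re h
  simp [pathPt] at h1 h2
  rcases h1 with h1 | h1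
  · subst h1; norm_num at h2
  · exact τ.im_ne_zero h1

lemma adm_arc (τ : ℍ) : Adm (fun x => -1 / (pathPt τ x + 2))
    (fun x => ((τ : ℂ) + 1) / (pathPt τ x + 2) ^ 2) where
  der x hx := by
    have := (((adm_seg τ).der x hx).add_const 2).inv (path_ne τ hx.1)
    have := this.neg
    have e : (fun x => -1 / (pathPt τ x + 2)) = -(fun x => pathPt τ x + 2)⁻¹ := by
      funext y
      simp [neg_div]
    rw [e]
    have e2 : ((τ : ℂ) + 1) / (pathPt τ x + 2) ^ 2 = -(-((τ : ℂ) + 1) / (pathPt τ x + 2) ^ 2) := by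
      ring
    rw [e2]
    exact this
  cont := by
    refine continuousOn_const.div (((adm_seg τ).contγ.add continuousOn_const).pow 2) ?_
    exact fun x hx => pow_ne_zero 2 (path_ne τ hx.1)
  zero := by norm_num [pathPt]
  pos x hx := by
    have h := (sig • (⟨pathPt τ x, (adm_seg τ).pos x hx⟩ : ℍ)).im_pos
    rwa [← UpperHalfPlane.coe_im, coe_sig] at h
  cone := by
    have ht := tau_add_one_norm τ
    obtain ⟨δ, hδ, hc⟩ := (adm_seg τ).cone
    refine ⟨δ / (1 + ‖(τ : ℂ) + 1‖), by positivity, fun x hx => ?_⟩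
    have hne := path_ne τ hx.1.le
    have n0 : 0 < ‖pathPt τ x + 2‖ := norm_pos_iff.2 hne
    have e1 : -1 / (pathPt τ x + 2) + 1 = (pathPt τ x + 1) / (pathPt τ x + 2) := by
      field_simp
      ring
    have e2 : (-1 / (pathPt τ x + 2)).im = (pathPt τ x).im / ‖pathPt τ x + 2‖ ^ 2 := by
      rw [Complex.sq_norm, neg_div, one_div]
      simp [Complex.inv_im, neg_div]
    have b : ‖pathPt τ x + 2‖ ≤ 1 + ‖(τ : ℂ) + 1‖ := by
      have : pathPt τ x + 2 = 1 + x * ((τ : ℂ) + 1) := by rw [← pathPt_add_one]; ring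
      rw [this]
      refine (norm_add_le _ _).trans ?_
      rw [norm_mul, Complex.norm_real, Real.norm_of_nonneg hx.1.le, norm_one]
      have := mul_le_mul_of_nonneg_right hx.2 ht.le
      linarith
    rw [e1, e2, norm_div, div_mul_div_comm, div_le_div_iff₀ (by positivity) (by positivity)]
    have c := hc x hx
    have p := (adm_seg τ).pos x hx
    calc δ * ‖pathPt τ x + 1‖ * ‖pathPt τ x + 2‖ ^ 2
        ≤ (pathPt τ x).im * ‖pathPt τ x + 2‖ ^ 2 := by gcongr
      _ = (pathPt τ x).im * (‖pathPt τ x + 2‖ * ‖pathPt τ x + 2‖) := by ring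
      _ ≤ (pathPt τ x).im * ((1 + ‖(τ : ℂ) + 1‖) * ‖pathPt τ x + 2‖) := by gcongr

/-- The unconjugated period integral. -/
noncomputable def In (g : ℍ → ℂ) (γ : SL(2, ℤ)) (i : ℕ) (τ : ℍ) : ℂ :=
  ∫ x in (0 : ℝ)..1, Hh g γ (pathPt τ x) * (pathPt τ x) ^ i * ((τ : ℂ) + 1)

lemma G_eq (g : ℍ → ℂ) (γ : SL(2, ℤ)) (i : ℕ) (τ : ℍ) : G g γ i τ = (starRingEnd ℂ) (In g γ i τ) :=
  rfl

lemma In_int (l : ℕ) (hl : 3 ≤ l) (g : CuspForm (CongruenceSubgroup.Gamma1 l) 4)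
    (lam : SL(2, ℤ)) (τ : ℍ) (i : ℕ) : IntervalIntegrable
    (fun x => Hh g lam (pathPt τ x) * (pathPt τ x) ^ i * ((τ : ℂ) + 1)) volume 0 1 :=
  (adm_seg τ).integrable (φ := fun s => Hh g lam s * s ^ i)
    ((Hh_diff l g lam).mul (differentiableOn_id.pow i)) ((Hh_bdd l hl g lam).mul_pow i)

lemma In_sig (l : ℕ) (hl : 3 ≤ l) (g : CuspForm (CongruenceSubgroup.Gamma1 l) 4)
    (lam : SL(2, ℤ)) (τ : ℍ) (i : ℕ) : In g lam i (sig • τ) =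
    ∫ x in (0 : ℝ)..1, Hh g (lam * sig) (pathPt τ x) *
      ((pathPt τ x + 2) ^ 2 * (-1 / (pathPt τ x + 2)) ^ i) * ((τ : ℂ) + 1) := by
  have h := path_indep (φ := fun s => Hh g lam s * s ^ i)
    ((Hh_diff l g lam).mul (differentiableOn_id.pow i)) ((Hh_bdd l hl g lam).mul_pow i)
    (adm_seg (sig • τ)) (adm_arc τ) (by
      have := coe_sig τ
      simp only [pathPt, Complex.ofReal_one, one_mul, neg_add_cancel_left, neg_add_cancel_comm]
      rw [this]; ring)
  refine Eq.trans h ?_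
  refine intervalIntegral.integral_congr_ae (Eventually.of_forall fun x hx => ?_)
  rw [uIoc_of_le zero_le_one] at hx
  have e := Hh_sig g lam ⟨pathPt τ x, (adm_seg τ).pos x hx⟩
  change Hh g (lam * sig) (pathPt τ x) = Hh g lam (-1 / (pathPt τ x + 2)) *
    (pathPt τ x + 2) ^ (-4 : ℤ) at e
  have hne := path_ne τ hx.1.le
  have z : (pathPt τ x + 2) ^ (-4 : ℤ) = ((pathPt τ x + 2) ^ 4)⁻¹ := by rw [zpow_neg]; rfl
  rw [e, z]
  generalize (-1 / (pathPt τ x + 2)) ^ i = w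
  field_simp

lemma In2 (l : ℕ) (hl : 3 ≤ l) (g : CuspForm (CongruenceSubgroup.Gamma1 l) 4)
    (lam : SL(2, ℤ)) (τ : ℍ) : In g lam 2 (sig • τ) = In g (lam * sig) 0 τ := by
  rw [In_sig l hl, In]
  refine intervalIntegral.integral_congr fun x hx => ?_
  rw [uIcc_of_le zero_le_one] at hx
  have hne := path_ne τ hx.1
  beta_reduce
  have : (pathPt τ x + 2) ^ 2 * (-1 / (pathPt τ x + 2)) ^ 2 = pathPt τ x ^ 0 := by
    field_simp
  rw [this]

lemma In1 (l : ℕ) (hl : 3 ≤ l) (g : CuspForm (CongruenceSubgroup.Gamma1 l) 4)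
    (lam : SL(2, ℤ)) (τ : ℍ) : In g lam 1 (sig • τ) = -In g (lam * sig) 1 τ - 2 * In g (lam * sig) 0 τ := by
  have i1 : IntervalIntegrable (fun x => -(Hh g (lam * sig) (pathPt τ x) * (pathPt τ x) ^ 1 *
    ((τ : ℂ) + 1))) volume 0 1 := (In_int l hl g (lam * sig) τ 1).neg
  rw [In_sig l hl, In, In, ← intervalIntegral.integral_const_mul, ← intervalIntegral.integral_neg,
    ← intervalIntegral.integral_sub i1
      ((In_int l hl g (lam * sig) τ 0).const_mul 2)]
  refine intervalIntegral.integral_congr fun x hx => ?_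
  rw [uIcc_of_le zero_le_one] at hx
  have hne := path_ne τ hx.1
  beta_reduce
  have : (pathPt τ x + 2) ^ 2 * (-1 / (pathPt τ x + 2)) ^ 1 = -(pathPt τ x + 2) := by
    field_simp
  rw [this]
  ring

lemma In0 (l : ℕ) (hl : 3 ≤ l) (g : CuspForm (CongruenceSubgroup.Gamma1 l) 4)
    (lam : SL(2, ℤ)) (τ : ℍ) : In g lam 0 (sig • τ) =
    In g (lam * sig) 2 τ + 4 * In g (lam * sig) 1 τ + 4 * In g (lam * sig) 0 τ := by
  have i0 := In_int l hl g (lam * sig) τ 0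
  have i1 := In_int l hl g (lam * sig) τ 1
  have i2 := In_int l hl g (lam * sig) τ 2
  rw [In_sig l hl, In, In, In, ← intervalIntegral.integral_const_mul,
    ← intervalIntegral.integral_const_mul,
    ← intervalIntegral.integral_add i2 (i1.const_mul 4),
    ← intervalIntegral.integral_add (i2.add (i1.const_mul 4)) (i0.const_mul 4)]
  refine intervalIntegral.integral_congr fun x hx => ?_
  beta_reduce
  ring

lemma fia_eq (f : ℍ → ℂ) (γ : SL(2, ℤ)) (i : ℕ) (τ : ℍ) : fia f γ i τ = Hh f γ τ * (τ : ℂ) ^ i := by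
  rw [Hh_eq, slash_eq, fia]

end MW

open MW in
theorem stmt18 (l : ℕ) (hl : 3 ≤ l)
    (f g : CuspForm (CongruenceSubgroup.Gamma1 l) 4)
    (lam : SL(2, ℤ)) (τ : ℍ) :
    (G (⇑g) (lam * sig) 0 τ = G (⇑g) lam 2 (sig • τ) ∧
      G (⇑g) (lam * sig) 1 τ = -G (⇑g) lam 1 (sig • τ) - 2 * G (⇑g) lam 2 (sig • τ) ∧
      G (⇑g) (lam * sig) 2 τ =
        G (⇑g) lam 0 (sig • τ) + 4 * G (⇑g) lam 1 (sig • τ) + 4 * G (⇑g) lam 2 (sig • τ)) ∧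
    G (⇑g) (lam * sig) 0 τ * fia (⇑f) (lam * sig) 2 τ -
        2 * G (⇑g) (lam * sig) 1 τ * fia (⇑f) (lam * sig) 1 τ +
        G (⇑g) (lam * sig) 2 τ * fia (⇑f) (lam * sig) 0 τ =
      (G (⇑g) lam 0 (sig • τ) * fia (⇑f) lam 2 (sig • τ) -
          2 * G (⇑g) lam 1 (sig • τ) * fia (⇑f) lam 1 (sig • τ) +
          G (⇑g) lam 2 (sig • τ) * fia (⇑f) lam 0 (sig • τ)) * ((τ : ℂ) + 2) ^ (-2 : ℤ) := by
  have h0 : G g (lam * sig) 0 τ = G g lam 2 (sig • τ) := by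
    rw [G_eq, G_eq, In2 l hl]
  have h1 : G g (lam * sig) 1 τ = -G g lam 1 (sig • τ) - 2 * G g lam 2 (sig • τ) := by
    simp only [G_eq, In2 l hl, In1 l hl, map_sub, map_neg, map_mul, map_ofNat]
    ring
  have h2 : G g (lam * sig) 2 τ =
      G g lam 0 (sig • τ) + 4 * G g lam 1 (sig • τ) + 4 * G g lam 2 (sig • τ) := by
    simp only [G_eq, In2 l hl, In1 l hl, In0 l hl, map_sub, map_neg, map_mul, map_add, map_ofNat]
    ring
  refine ⟨⟨h0, h1, h2⟩, ?_⟩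
  rw [h0, h1, h2]
  simp only [fia_eq, Hh_sig, coe_sig]
  have hne : (τ : ℂ) + 2 ≠ 0 := by
    intro h
    have := congrArg Complex.im h
    simp at this
    exact τ.im_ne_zero this
  have z4 : ((τ : ℂ) + 2) ^ (-4 : ℤ) = (((τ : ℂ) + 2) ^ 4)⁻¹ := by rw [zpow_neg]; rfl
  have z2 : ((τ : ℂ) + 2) ^ (-2 : ℤ) = (((τ : ℂ) + 2) ^ 2)⁻¹ := by rw [zpow_neg]; rfl
  rw [z4, z2]
  field_simp
  ring
end
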